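/- Let p be a prime integer, k ≥ 0 an integer, and let Δ ⊂ ℝ^d be a lattice simplex of dimension d which has δ-polynomial 1 + t^{k+1} + t^{2(k+1)} + ⋯ + t^{(p²−1)(k+1)} and is not a lattice pyramid over any lower-dimensional lattice simplex. Then Δ is unimodularly equivalent to one of the following three simplices: (1) Δ(A₁) where A₁ = (1, …, 1, p²) has p²(k+1) − 2 entries equal to 1 followed by p² (here d = p²(k+1) − 1); (2) Δ(A₂) where A₂ = (1, …, 1, p, …, p, p²) has p(k+1) − 1 entries equal to 1, then (p²−1)(k+1) − 1 entries equal to p, then p² (here d = (p² + p − 1)(k+1) − 1); (3) Δ(B, C) where B = (1, …, 1, p) has p(k+1) − 1 entries equal to 1 followed by p (so s = p(k+1)), and C = (p, …, p, 1, …, 1, p) has p(k+1) entries equal to p, then p²(k+1) − 2 entries equal to 1, then p (here d = p(p+1)(k+1) − 1). -/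

import Mathlib

open scoped BigOperators Pointwise

/-- `Δ ⊆ ℝ^d` is a lattice simplex of dimension `d`:
the convex hull of `d+1` affinely independent points of `ℤ^d`. -/
def IsLatticeSimplex {d : ℕ} (Δ : Set (Fin d → ℝ)) : Prop :=
  ∃ V : Fin (d+1) → (Fin d → ℤ),
    AffineIndependent ℝ (fun i => (fun j => ((V i j : ℤ) : ℝ))) ∧
    Δ = convexHull ℝ (Set.range (fun i => (fun j => ((V i j : ℤ) : ℝ))))

/-- The number of lattice points of a subset of `ℝ^d`. -/
noncomputable def latticePointCount {d : ℕ} (S : Set (Fin d → ℝ)) : ℕ :=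
  Set.ncard {x : Fin d → ℤ | (fun j => ((x j : ℤ) : ℝ)) ∈ S}

/-- `Δ` has `δ`-polynomial `1 + t^(k+1) + t^(2(k+1)) + ⋯ + t^((v-1)(k+1))`:
the coefficientwise form of the Ehrhart series identity. -/
def HasDeltaPolySimplex (d v k : ℕ) (Δ : Set (Fin d → ℝ)) : Prop :=
  ∀ n : ℕ, latticePointCount ((n : ℝ) • Δ) =
    ∑ j ∈ Finset.range v,
      if j * (k+1) ≤ n then Nat.choose (n - j * (k+1) + d) d else 0

/-- Unimodular equivalence of subsets of `ℝ^d`. -/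
def UnimodEquiv {d : ℕ} (P Q : Set (Fin d → ℝ)) : Prop :=
  ∃ U : Matrix (Fin d) (Fin d) ℤ, ∃ w : Fin d → ℤ,
    IsUnit U.det ∧
    Q = (fun x : Fin d → ℝ =>
      Matrix.vecMul x (U.map (fun a : ℤ => (a : ℝ))) + (fun j => ((w j : ℤ) : ℝ))) '' P

/-- The lattice pyramid over `Q ⊆ ℝ^e`. -/
def Pyr {e : ℕ} (Q : Set (Fin e → ℝ)) : Set (Fin (e+1) → ℝ) :=
  convexHull ℝ
    (((fun x : Fin e → ℝ => Fin.snoc x 0) '' Q) ∪ {Fin.snoc (0 : Fin e → ℝ) 1})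

/-- The last entry of a finite integer sequence (junk value `0` if empty). -/
def lastEntry {n : ℕ} (A : Fin n → ℤ) : ℤ :=
  if h : 0 < n then A ⟨n-1, by omega⟩ else 0

/-- The last row `(a_d - a_1, …, a_d - a_{d-1}, a_d)` of the vertex matrix of `Δ(A)`. -/
def rowA {d : ℕ} (A : Fin d → ℤ) : Fin d → ℝ :=
  fun j => ((lastEntry A - if (j : ℕ) + 1 < d then A j else 0 : ℤ) : ℝ)

/-- The simplex `Δ(A)`: the convex hull of the origin, the unit vectors
`e_1, …, e_{d-1}` and the row `(a_d - a_1, …, a_d - a_{d-1}, a_d)`. -/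
def simplexA {d : ℕ} (A : Fin d → ℤ) : Set (Fin d → ℝ) :=
  convexHull ℝ (insert 0 (Set.range (fun i : Fin d =>
    if (i : ℕ) + 1 < d then (Pi.single i 1 : Fin d → ℝ) else rowA A)))

/-- The row `(b_s - b_1, …, b_s - b_{s-1}, b_s, 0, …, 0)` of the vertex matrix of `Δ(B,C)`. -/
def rowB {d : ℕ} (s : ℕ) (B : Fin s → ℤ) : Fin d → ℝ :=
  fun j =>
    if h : (j : ℕ) + 1 < s then ((lastEntry B - B ⟨(j : ℕ), by omega⟩ : ℤ) : ℝ)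
    else if (j : ℕ) + 1 = s then ((lastEntry B : ℤ) : ℝ)
    else 0

/-- The simplex `Δ(B,C)`: the convex hull of the origin, the unit vectors
`e_1, …, e_{s-1}`, the row `(b_s - b_1, …, b_s - b_{s-1}, b_s, 0, …, 0)`,
the unit vectors `e_{s+1}, …, e_{d-1}` and the row `(c_d - c_1, …, c_d - c_{d-1}, c_d)`. -/
def simplexBC {d : ℕ} (s : ℕ) (B : Fin s → ℤ) (C : Fin d → ℤ) : Set (Fin d → ℝ) :=
  convexHull ℝ (insert 0 (Set.range (fun i : Fin d =>
    if (i : ℕ) + 1 = s then rowB s B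
    else if (i : ℕ) + 1 = d then rowA C
    else (Pi.single i 1 : Fin d → ℝ))))

/-!
The vertices `v₀, …, v_d` of a lattice simplex have a finite group `Λ ⊆ (ℝ/ℤ)^(d+1)` of relations
`∑ tᵢ (vᵢ, 1) = 0` modulo `1`, and `Λ` determines the simplex up to unimodular equivalence. Let
`m = k + 1`, and let the height of `t ∈ Λ` be the sum of the representatives of its coordinates
in `[0, 1)`. The hypothesis on the `δ`-polynomial says that `Λ` has exactly one element of each
of the heights `0, m, 2m, …, (p² - 1)m`; let `x` and `y` be those of heights `m` and `p m`. Since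
the height is subadditive and takes every value once, there is no loss in `height (i x) ≤ i m` for
`i` below the order of `x`, so all `i xⱼ` stay below `1`.

If `x` has order `p²`, then it generates `Λ` and its coordinates are `0` or `1/p²`. Otherwise `x`
has order `p` and coordinates `0` or `1/p`, the elements `x` and `y` generate `Λ`, and
`height (i y + j x) = (i p + j) m` for `i, j < p`; hence `y` is `1/p` off the support `S` of `x`,
and either `1/p²` on all of `S` or `0` on all of `S`. No coordinate vanishes on `Λ`, since the
simplex would then be a pyramid with apex the corresponding vertex. The heights of `x` and `y` now
give the number of coordinates of each kind.
-/

section Circle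

lemma coe_unitAddCircle_eq_zero_iff {x : ℝ} : (x : UnitAddCircle) = 0 ↔ ∃ z : ℤ, (z : ℝ) = x := by
  simp only [AddCircle.coe_eq_zero_iff, zsmul_one]

/-- The fractional part of a class in `ℝ/ℤ`, i.e. its representative in `[0, 1)`. -/
noncomputable def circleFract (a : UnitAddCircle) : ℝ :=
  AddCircle.equivIco 1 0 a

lemma coe_circleFract (a : UnitAddCircle) : (circleFract a : UnitAddCircle) = a :=
  AddCircle.coe_equivIco

lemma circleFract_coe (x : ℝ) : circleFract (x : UnitAddCircle) = Int.fract x := by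
  simp [circleFract, AddCircle.coe_equivIco_mk_apply]

lemma circleFract_nonneg (a : UnitAddCircle) : 0 ≤ circleFract a :=
  (AddCircle.equivIco 1 0 a).2.1

lemma circleFract_lt_one (a : UnitAddCircle) : circleFract a < 1 := by
  simpa [circleFract] using (AddCircle.equivIco 1 0 a).2.2

lemma circleFract_coe_of_mem_Ico {x : ℝ} (hx : x ∈ Set.Ico (0 : ℝ) 1) :
    circleFract (x : UnitAddCircle) = x := by
  rw [circleFract_coe, Int.fract_eq_self.2 hx]

lemma circleFract_injective : Function.Injective circleFract := fun a b h => by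
  rw [← coe_circleFract a, h, coe_circleFract]

lemma circleFract_zero : circleFract 0 = 0 := by
  simpa using circleFract_coe 0

lemma circleFract_coe_le {x : ℝ} (hx : 0 ≤ x) : circleFract (x : UnitAddCircle) ≤ x := by
  rw [circleFract_coe]
  linarith [Int.fract_add_floor x, Int.cast_nonneg (R := ℝ) (Int.floor_nonneg.2 hx)]

lemma circleFract_add_le (a b : UnitAddCircle) :
    circleFract (a + b) ≤ circleFract a + circleFract b := by
  simpa [coe_circleFract] using
    circleFract_coe_le (add_nonneg (circleFract_nonneg a) (circleFract_nonneg b))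

lemma circleFract_nsmul_le (n : ℕ) (a : UnitAddCircle) :
    circleFract (n • a) ≤ n * circleFract a := by
  simpa [coe_circleFract] using
    circleFract_coe_le (mul_nonneg n.cast_nonneg (circleFract_nonneg a))

lemma circleFract_nsmul_of_lt {n : ℕ} {a : UnitAddCircle} (h : n * circleFract a < 1) :
    circleFract (n • a) = n * circleFract a := by
  have hmem : (n * circleFract a : ℝ) ∈ Set.Ico (0 : ℝ) 1 :=
    ⟨mul_nonneg n.cast_nonneg (circleFract_nonneg a), h⟩
  rw [← circleFract_coe_of_mem_Ico hmem, ← nsmul_eq_mul, AddCircle.coe_nsmul, coe_circleFract]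

/-- The standard generator `1/n` of the `n`-torsion of the circle. -/
noncomputable def torsionGen (n : ℕ) : UnitAddCircle :=
  ((n : ℝ)⁻¹ : ℝ)

lemma nsmul_eq_zero_iff_torsionGen {n : ℕ} (hn : 0 < n) {a : UnitAddCircle} :
    n • a = 0 ↔ ∃ c < n, c • torsionGen n = a := by
  have hcoe (c : ℕ) : c • torsionGen n = ((c / n * 1 : ℝ) : UnitAddCircle) := by
    rw [torsionGen, ← AddCircle.coe_nsmul, nsmul_eq_mul, mul_one, div_eq_mul_inv]
  simp only [AddCircle.nsmul_eq_zero_iff hn, hcoe]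

lemma nsmul_torsionGen_mul {m n : ℕ} (hm : 0 < m) :
    m • torsionGen (m * n) = torsionGen n := by
  have hm' : (m : ℝ) ≠ 0 := by positivity
  rw [torsionGen, torsionGen, ← AddCircle.coe_nsmul, nsmul_eq_mul, Nat.cast_mul, mul_inv,
    mul_inv_cancel_left₀ hm']

lemma nsmul_torsionGen {n : ℕ} (hn : 0 < n) : n • torsionGen n = 0 := by
  simpa [torsionGen, AddCircle.coe_period] using nsmul_torsionGen_mul (n := 1) hn

lemma circleFract_nsmul_torsionGen {n c : ℕ} (hc : c < n) :
    circleFract (c • torsionGen n) = c / n := by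
  have hn : (0 : ℝ) < n := by exact_mod_cast (Nat.zero_le c).trans_lt hc
  have hlt : (c / n : ℝ) < 1 := (div_lt_one hn).2 (by exact_mod_cast hc)
  rw [torsionGen, ← AddCircle.coe_nsmul, nsmul_eq_mul, ← div_eq_mul_inv]
  exact circleFract_coe_of_mem_Ico ⟨by positivity, hlt⟩

lemma circleFract_torsionGen {n : ℕ} (hn : 2 ≤ n) : circleFract (torsionGen n) = 1 / n := by
  simpa using circleFract_nsmul_torsionGen (c := 1) hn

lemma lt_two_of_sub_one_mul_lt {n c : ℕ} (hn : 2 ≤ n) (h : (n - 1) * c < n) : c < 2 := by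
  by_contra! hc
  have := Nat.mul_le_mul_left (n - 1) hc
  lia

lemma eq_zero_or_eq_torsionGen {n : ℕ} (hn : 2 ≤ n) {a : UnitAddCircle} (ha : n • a = 0)
    (hlt : (n - 1 : ℕ) * circleFract a < 1) : a = 0 ∨ a = torsionGen n := by
  obtain ⟨c, hc, rfl⟩ := (nsmul_eq_zero_iff_torsionGen (by lia)).1 ha
  rw [circleFract_nsmul_torsionGen hc, mul_div_assoc', div_lt_one (by positivity)] at hlt
  have hc2 : c < 2 := lt_two_of_sub_one_mul_lt hn (by exact_mod_cast hlt)
  interval_cases c <;> simp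

lemma eq_nsmul_torsionGen_sq {n b : ℕ} (hn : 2 ≤ n) (hb : b < n) {a : UnitAddCircle}
    (ha : n • a = b • torsionGen n)
    (hlt : (n - 1 : ℕ) * (circleFract a + circleFract (torsionGen n)) < 1) :
    b ≤ 1 ∧ a = b • torsionGen (n ^ 2) := by
  have hn0 : (0 : ℝ) < n := by positivity
  have hn1 : (1 : ℝ) ≤ (n - 1 : ℕ) := by exact_mod_cast (by lia : 1 ≤ n - 1)
  have hcast : ((n - 1 : ℕ) : ℝ) = n - 1 := by push_cast [show 1 ≤ n by lia]; ring
  have hmul : (n - 1 : ℕ) * (n * circleFract a) < 1 := by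
    have := mul_lt_mul_of_pos_left hlt hn0
    rw [circleFract_torsionGen hn] at this
    field_simp at this
    linarith
  have hfract : n * circleFract a = b / n := by
    rw [← circleFract_nsmul_of_lt, ha, circleFract_nsmul_torsionGen hb]
    exact (le_mul_of_one_le_left (mul_nonneg hn0.le (circleFract_nonneg a)) hn1).trans_lt hmul
  constructor
  · rw [hfract, mul_div_assoc', div_lt_one hn0] at hmul
    exact Nat.lt_succ_iff.1 (lt_two_of_sub_one_mul_lt hn (by exact_mod_cast hmul))
  · refine circleFract_injective ?_
    rw [circleFract_nsmul_torsionGen (hb.trans_le (Nat.le_self_pow two_ne_zero n)), Nat.cast_pow]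
    field_simp at hfract ⊢
    exact hfract

end Circle

section TorusHeight

variable {ι : Type*} [Fintype ι]

/-- The height of a torus element: the sum of the coordinates of its representative in
the unit box. For the group of a lattice simplex it is the degree of the box point. -/
noncomputable def torusHeight (t : ι → UnitAddCircle) : ℝ :=
  ∑ i, circleFract (t i)

lemma torusHeight_add_le (s t : ι → UnitAddCircle) :
    torusHeight (s + t) ≤ torusHeight s + torusHeight t := by
  rw [torusHeight, torusHeight, torusHeight, ← Finset.sum_add_distrib]
  exact Finset.sum_le_sum fun i _ => circleFract_add_le (s i) (t i)

lemma torusHeight_nonneg (t : ι → UnitAddCircle) : 0 ≤ torusHeight t :=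
  Finset.sum_nonneg fun i _ => circleFract_nonneg (t i)

lemma lt_one_of_torusHeight_eq_sum {t : ι → UnitAddCircle} {f : ι → ℝ}
    (hle : ∀ i, circleFract (t i) ≤ f i) (hsum : torusHeight t = ∑ i, f i) (i : ι) : f i < 1 := by
  have heq := (Finset.sum_eq_sum_iff_of_le fun i _ => hle i).1 hsum i (Finset.mem_univ i)
  exact heq ▸ circleFract_lt_one (t i)

lemma mul_circleFract_lt_one {n : ℕ} {t : ι → UnitAddCircle}
    (h : torusHeight (n • t) = n * torusHeight t) (i : ι) : n * circleFract (t i) < 1 := by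
  refine lt_one_of_torusHeight_eq_sum (t := n • t) (fun i => circleFract_nsmul_le n (t i)) ?_ i
  rw [h, torusHeight, Finset.mul_sum]

lemma eq_zero_or_eq_torsionGen_of_torusHeight {n : ℕ} (hn : 2 ≤ n) {t : ι → UnitAddCircle}
    (ht : n • t = 0) (h : torusHeight ((n - 1) • t) = (n - 1 : ℕ) * torusHeight t) (i : ι) :
    t i = 0 ∨ t i = torsionGen n :=
  eq_zero_or_eq_torsionGen hn (congrFun ht i) (mul_circleFract_lt_one h i)

end TorusHeight

/-- A bijective numbering `h` of a finite abelian group `G` by `0, …, #G - 1` with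
`h (a + b) ≤ h a + h b`. For the group of a simplex with `δ`-polynomial `∑ j < v, t ^ (j m)`,
it is the height divided by `m`. -/
structure IsSubadditiveNumbering {G : Type*} [AddCommGroup G] (h : G → ℕ) : Prop where
  injective : Function.Injective h
  lt_card (a : G) : h a < Nat.card G
  add_le (a b : G) : h (a + b) ≤ h a + h b

namespace IsSubadditiveNumbering

variable {G : Type*} [AddCommGroup G] {h : G → ℕ}

lemma exists_eq (H : IsSubadditiveNumbering h) {n : ℕ} (hn : n < Nat.card G) : ∃ a, h a = n := by
  have hsub : Set.range h ⊆ Set.Iio (Nat.card G) := Set.range_subset_iff.2 H.lt_card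
  have hcard : (Set.Iio (Nat.card G)).ncard ≤ (Set.range h).ncard := by
    rw [Set.ncard_range_of_injective H.injective, Set.ncard_eq_toFinset_card']
    simp
  exact (Set.eq_of_subset_of_ncard_le hsub hcard).ge hn

lemma map_zero (H : IsSubadditiveNumbering h) : h 0 = 0 := by
  obtain ⟨z, hz⟩ := H.exists_eq ((Nat.zero_le _).trans_lt (H.lt_card 0))
  have hzz : h (z + z) = h z := by have := H.add_le z z; lia
  rwa [← add_eq_left.1 (H.injective hzz)]

lemma nsmul_le (H : IsSubadditiveNumbering h) (n : ℕ) (a : G) : h (n • a) ≤ n * h a := by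
  induction n with
  | zero => simp [H.map_zero]
  | succ n ih => rw [succ_nsmul, Nat.succ_mul]; exact (H.add_le _ _).trans (by gcongr)

/-- If `K` carries the numbers below `n` and `y` has number `n`, then the multiples of `y` enumerate
cosets of `K` without loss: a smaller number would already be taken by an earlier coset. -/
lemma apply_nsmul_add (H : IsSubadditiveNumbering h) {K : AddSubgroup G} {n r : ℕ} {y : G}
    (hK : h '' K = Set.Iio n) (hy : h y = n) (hr : ∀ i, 0 < i → i < r → i • y ∉ K)
    {i : ℕ} (hi : i < r) {a : G} (ha : a ∈ K) : h (i • y + a) = i * n + h a := by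
  induction hN : i * n + h a using Nat.strong_induction_on generalizing i a with | _ N ih
  have hn : 0 < n := (Nat.zero_le _).trans_lt (hK.le ⟨0, K.zero_mem, rfl⟩)
  have hle : h (i • y + a) ≤ N :=
    (H.add_le _ _).trans (by rw [← hN, ← hy]; gcongr; exact H.nsmul_le i y)
  by_contra hne
  obtain ⟨j, b, hb, hjb⟩ : ∃ j, ∃ b ∈ K, j * n + h b = h (i • y + a) := by
    obtain ⟨b, hb, hmod⟩ := hK.ge (Nat.mod_lt (h (i • y + a)) hn)
    exact ⟨h (i • y + a) / n, b, hb, by rw [hmod, Nat.div_add_mod']⟩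
  have han : h a < n := hK.le ⟨a, ha, rfl⟩
  have hji : j ≤ i := by
    by_contra! hij
    have := Nat.mul_le_mul_right n hij
    lia
  have heq : j • y + b = i • y + a :=
    H.injective ((ih _ (by lia) (hji.trans_lt hi) hb rfl).trans hjb)
  obtain rfl | hlt := hji.eq_or_lt
  · exact hne (by rw [← hN, ← hjb, add_left_cancel heq])
  · refine hr (i - j) (by lia) (by lia) ?_
    have hsub : (i - j) • y = b - a := by
      rw [sub_nsmul _ hji, ← sub_eq_add_neg, sub_eq_sub_iff_add_eq_add, ← heq, add_comm]
    exact hsub ▸ K.sub_mem hb ha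

lemma apply_nsmul (H : IsSubadditiveNumbering h) {x : G} (hx : h x = 1) {i : ℕ}
    (hi : i < addOrderOf x) : h (i • x) = i := by
  have hbot : h '' (⊥ : AddSubgroup G) = Set.Iio 1 := by
    ext n
    simp [H.map_zero]
  simpa [H.map_zero] using H.apply_nsmul_add hbot hx
    (fun j hj hjr => nsmul_ne_zero_of_lt_addOrderOf hj.ne' hjr) hi (zero_mem _)

lemma image_zmultiples (H : IsSubadditiveNumbering h) {x : G} (hx : h x = 1)
    (hord : 0 < addOrderOf x) : h '' (AddSubgroup.zmultiples x) = Set.Iio (addOrderOf x) := by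
  classical
  ext n
  constructor
  · rintro ⟨a, ha, rfl⟩
    obtain ⟨i, hi, rfl⟩ := Finset.mem_image.1
      ((addOrderOf_pos_iff.1 hord).mem_zmultiples_iff_mem_range_addOrderOf.1 ha)
    have hi' : i < addOrderOf x := Finset.mem_range.1 hi
    simpa [H.apply_nsmul hx hi'] using hi'
  · exact fun hn => ⟨n • x, AddSubgroup.nsmul_mem_zmultiples x n, H.apply_nsmul hx hn⟩

variable {p : ℕ}

lemma addOrderOf_eq (H : IsSubadditiveNumbering h) (hp : p.Prime) (hcard : Nat.card G = p ^ 2)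
    {x : G} (hx : h x = 1) : addOrderOf x = p ∨ addOrderOf x = p ^ 2 := by
  obtain ⟨e, he, hord⟩ := (Nat.dvd_prime_pow hp).1 (hcard ▸ addOrderOf_dvd_natCard x)
  interval_cases e
  · have hx0 : x = 0 := by simpa using hord
    simp [hx0, H.map_zero] at hx
  · exact .inl (by simpa using hord)
  · exact .inr hord

lemma nsmul_notMem_zmultiples (H : IsSubadditiveNumbering h) (hp : p.Prime)
    (hcard : Nat.card G = p ^ 2) {x y : G} (hx : h x = 1) (hord : addOrderOf x = p) (hy : h y = p)
    {i : ℕ} (hi : 0 < i) (hip : i < p) : i • y ∉ AddSubgroup.zmultiples x := by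
  intro hmem
  have hcop : i.Coprime (addOrderOf y) := (Nat.Coprime.pow_left 2
    (Nat.coprime_of_lt_prime hi.ne' hip hp)).symm.coprime_dvd_right
      (hcard ▸ addOrderOf_dvd_natCard y)
  obtain ⟨m, hm⟩ := exists_nsmul_eq_self_of_coprime hcop
  have hyK : y ∈ AddSubgroup.zmultiples x := hm ▸ nsmul_mem hmem m
  have hlt : h y < addOrderOf x :=
    (H.image_zmultiples hx (hord ▸ hp.pos)).le ⟨y, hyK, rfl⟩
  lia

lemma apply_nsmul_add_nsmul (H : IsSubadditiveNumbering h) (hp : p.Prime)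
    (hcard : Nat.card G = p ^ 2) {x y : G} (hx : h x = 1) (hord : addOrderOf x = p) (hy : h y = p)
    {i j : ℕ} (hi : i < p) (hj : j < p) : h (i • y + j • x) = i * p + j := by
  have himage := H.image_zmultiples hx (hord ▸ hp.pos)
  rw [hord] at himage
  rw [H.apply_nsmul_add himage hy (fun i => H.nsmul_notMem_zmultiples hp hcard hx hord hy) hi
    (AddSubgroup.nsmul_mem_zmultiples x j), H.apply_nsmul hx (hord ▸ hj)]

lemma exists_eq_nsmul_add_nsmul (H : IsSubadditiveNumbering h) (hp : p.Prime)
    (hcard : Nat.card G = p ^ 2) {x y : G} (hx : h x = 1) (hord : addOrderOf x = p) (hy : h y = p)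
    (a : G) : ∃ i < p, ∃ j < p, a = i • y + j • x := by
  have hi : h a / p < p := Nat.div_lt_of_lt_mul (by simpa [hcard, sq] using H.lt_card a)
  have hj : h a % p < p := Nat.mod_lt _ hp.pos
  refine ⟨h a / p, hi, h a % p, hj, H.injective ?_⟩
  rw [H.apply_nsmul_add_nsmul hp hcard hx hord hy hi hj, Nat.div_add_mod']

lemma exists_prime_nsmul_eq (H : IsSubadditiveNumbering h) (hp : p.Prime)
    (hcard : Nat.card G = p ^ 2) {x y : G} (hx : h x = 1) (hord : addOrderOf x = p)
    (hy : h y = p) : ∃ b < p, p • y = b • x := by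
  obtain ⟨i, hi, b, hb, heq⟩ := H.exists_eq_nsmul_add_nsmul hp hcard hx hord hy (p • y)
  obtain rfl | hi0 := Nat.eq_zero_or_pos i
  · exact ⟨b, hb, by simpa using heq⟩
  · have hsub : (p - i) • y = b • x := by
      rw [sub_nsmul _ hi.le, heq, add_assoc, add_comm, add_assoc, neg_add_cancel, add_zero]
    exact absurd (hsub ▸ AddSubgroup.nsmul_mem_zmultiples x b)
      (H.nsmul_notMem_zmultiples hp hcard hx hord hy (by lia) (by lia))

end IsSubadditiveNumbering

section TwoValued

variable {ι : Type*} [DecidableEq ι]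

/-- The torus element with value `a.1` on `S` and `a.2` off `S`. -/
def twoValued (S : Finset ι) : UnitAddCircle × UnitAddCircle →+ (ι → UnitAddCircle) where
  toFun a i := if i ∈ S then a.1 else a.2
  map_zero' := by ext; simp
  map_add' a b := by ext i; by_cases hi : i ∈ S <;> simp [hi]

lemma twoValued_apply (S : Finset ι) (a : UnitAddCircle × UnitAddCircle) (i : ι) :
    twoValued S a i = if i ∈ S then a.1 else a.2 := rfl

lemma sum_ite_mem_eq [Fintype ι] {A : Type*} [AddCommMonoid A] (S : Finset ι) (a b : A) :
    ∑ i, (if i ∈ S then a else b) = S.card • a + Sᶜ.card • b := by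
  rw [← Finset.sum_add_sum_compl S, Finset.sum_congr rfl fun i hi => if_pos hi,
    Finset.sum_congr rfl fun i hi => if_neg (Finset.mem_compl.1 hi)]
  simp

lemma sum_twoValued [Fintype ι] (S : Finset ι) (a : UnitAddCircle × UnitAddCircle) :
    ∑ i, twoValued S a i = S.card • a.1 + Sᶜ.card • a.2 :=
  sum_ite_mem_eq S a.1 a.2

lemma torusHeight_twoValued [Fintype ι] (S : Finset ι) (a : UnitAddCircle × UnitAddCircle) :
    torusHeight (twoValued S a) = S.card * circleFract a.1 + Sᶜ.card * circleFract a.2 := by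
  simp only [torusHeight, twoValued_apply, apply_ite circleFract, sum_ite_mem_eq, nsmul_eq_mul]

/-- The pairs `(a, p a)` with `a` of order dividing `p²`. -/
def cyclicPairs (p : ℕ) : Set (UnitAddCircle × UnitAddCircle) :=
  {a | p ^ 2 • a.1 = 0 ∧ a.2 = p • a.1}

/-- The pairs of `p`-torsion points of the circle. -/
def torsionPairs (p : ℕ) : Set (UnitAddCircle × UnitAddCircle) :=
  {a | p • a.1 = 0 ∧ p • a.2 = 0}

lemma mem_cyclicPairs_iff {p : ℕ} (hp : 0 < p) {a : UnitAddCircle × UnitAddCircle} :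
    a ∈ cyclicPairs p ↔ ∃ n : ℕ, n • (torsionGen (p ^ 2), torsionGen p) = a := by
  have hgen : p • torsionGen (p ^ 2) = torsionGen p := by
    rw [sq, nsmul_torsionGen_mul hp]
  constructor
  · rintro ⟨h1, h2⟩
    obtain ⟨n, -, hn⟩ := (nsmul_eq_zero_iff_torsionGen (by positivity)).1 h1
    exact ⟨n, Prod.ext hn (by rw [h2, ← hn, nsmul_left_comm, hgen]; rfl)⟩
  · rintro ⟨n, rfl⟩
    refine ⟨?_, ?_⟩
    · rw [Prod.smul_fst, nsmul_left_comm, nsmul_torsionGen (by positivity), nsmul_zero]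
    · rw [Prod.smul_fst, Prod.smul_snd, nsmul_left_comm, hgen]

lemma mem_torsionPairs_iff {p : ℕ} (hp : 0 < p) {a : UnitAddCircle × UnitAddCircle} :
    a ∈ torsionPairs p ↔
      ∃ i < p, ∃ j < p, i • (0, torsionGen p) + j • (torsionGen p, 0) = a := by
  obtain ⟨a₁, a₂⟩ := a
  simp only [torsionPairs, Set.mem_ofPred_eq, nsmul_eq_zero_iff_torsionGen hp, Prod.smul_mk,
    nsmul_zero, Prod.mk_add_mk, zero_add, add_zero, Prod.mk.injEq]
  exact ⟨fun ⟨⟨j, hj, h1⟩, i, hi, h2⟩ => ⟨i, hi, j, hj, h1, h2⟩,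
    fun ⟨i, hi, j, hj, h1, h2⟩ => ⟨⟨j, hj, h1⟩, i, hi, h2⟩⟩

variable {Λ : AddSubgroup (ι → UnitAddCircle)} {p : ℕ} {x y : Λ}

lemma coe_eq_image_cyclicPairs (hp : 0 < p) {S : Finset ι} (hΛ : ∀ t : Λ, ∃ n : ℕ, n • x = t)
    (hx : (x : ι → UnitAddCircle) = twoValued S (torsionGen (p ^ 2), torsionGen p)) :
    (Λ : Set (ι → UnitAddCircle)) = twoValued S '' cyclicPairs p := by
  have hnsmul (n : ℕ) : ((n • x : Λ) : ι → UnitAddCircle) =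
      twoValued S (n • (torsionGen (p ^ 2), torsionGen p)) := by
    rw [AddSubgroup.coe_nsmul, hx, map_nsmul]
  ext t
  constructor
  · intro ht
    obtain ⟨n, hn⟩ := hΛ ⟨t, ht⟩
    exact ⟨_, (mem_cyclicPairs_iff hp).2 ⟨n, rfl⟩, by rw [← hnsmul, hn]⟩
  · rintro ⟨a, ha, rfl⟩
    obtain ⟨n, rfl⟩ := (mem_cyclicPairs_iff hp).1 ha
    exact hnsmul n ▸ (n • x).2

lemma coe_eq_image_torsionPairs (hp : 0 < p) {S : Finset ι}
    (hΛ : ∀ t : Λ, ∃ i < p, ∃ j < p, t = i • y + j • x)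
    (hx : (x : ι → UnitAddCircle) = twoValued S (torsionGen p, 0))
    (hy : (y : ι → UnitAddCircle) = twoValued S (0, torsionGen p)) :
    (Λ : Set (ι → UnitAddCircle)) = twoValued S '' torsionPairs p := by
  have hcomb (i j : ℕ) : ((i • y + j • x : Λ) : ι → UnitAddCircle) =
      twoValued S (i • (0, torsionGen p) + j • (torsionGen p, 0)) := by
    rw [AddSubgroup.coe_add, AddSubgroup.coe_nsmul, AddSubgroup.coe_nsmul, hx, hy, map_add,
      map_nsmul, map_nsmul]
  ext t
  constructor
  · intro ht
    obtain ⟨i, hi, j, hj, hij⟩ := hΛ ⟨t, ht⟩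
    exact ⟨_, (mem_torsionPairs_iff hp).2 ⟨i, hi, j, hj, rfl⟩, by rw [← hcomb, ← hij]⟩
  · rintro ⟨a, ha, rfl⟩
    obtain ⟨i, -, j, -, rfl⟩ := (mem_torsionPairs_iff hp).1 ha
    exact hcomb i j ▸ (i • y + j • x).2

end TwoValued

section Classification

variable {ι : Type*} [Fintype ι] {Λ : AddSubgroup (ι → UnitAddCircle)}
  {h : Λ → ℕ} {p m : ℕ} {x y : Λ}

lemma eq_zero_or_eq_torsionGen_of_addOrderOf (H : IsSubadditiveNumbering h)
    (hheight : ∀ t : Λ, torusHeight (t : ι → UnitAddCircle) = h t * m) {n : ℕ} (hn : 2 ≤ n)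
    (hx : h x = 1) (hord : addOrderOf x = n) (i : ι) : x.1 i = 0 ∨ x.1 i = torsionGen n := by
  have hnx : n • x = 0 := hord ▸ addOrderOf_nsmul_eq_zero x
  refine eq_zero_or_eq_torsionGen_of_torusHeight hn (congrArg Subtype.val hnx) ?_ i
  rw [← AddSubgroup.coe_nsmul, hheight, hheight, H.apply_nsmul hx (by lia), hx, Nat.cast_one,
    one_mul]

lemma sub_one_mul_add_circleFract_lt_one (H : IsSubadditiveNumbering h) (hp : p.Prime)
    (hheight : ∀ t : Λ, torusHeight (t : ι → UnitAddCircle) = h t * m)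
    (hcard : Nat.card Λ = p ^ 2) (hx : h x = 1) (hord : addOrderOf x = p) (hy : h y = p) (i : ι) :
    (p - 1 : ℕ) * (circleFract (y.1 i) + circleFract (x.1 i)) < 1 := by
  have hlt : p - 1 < p := Nat.sub_lt hp.pos one_pos
  refine lt_one_of_torusHeight_eq_sum (t := ((p - 1) • y + (p - 1) • x).1)
    (f := fun i => (p - 1 : ℕ) * (circleFract (y.1 i) + circleFract (x.1 i))) (fun i => ?_) ?_ i
  · rw [mul_add]
    exact (circleFract_add_le _ _).trans
      (add_le_add (circleFract_nsmul_le _ _) (circleFract_nsmul_le _ _))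
  · calc torusHeight ((p - 1) • y + (p - 1) • x).1
      _ = (p - 1 : ℕ) * (torusHeight y.1 + torusHeight x.1) := by
        rw [hheight, hheight, hheight, H.apply_nsmul_add_nsmul hp hcard hx hord hy hlt hlt, hx, hy]
        push_cast
        ring
      _ = _ := by rw [torusHeight, torusHeight, ← Finset.sum_add_distrib, Finset.mul_sum]

variable [DecidableEq ι]

lemma eq_image_cyclicPairs_univ (H : IsSubadditiveNumbering h) (hp : p.Prime)
    (hheight : ∀ t : Λ, torusHeight (t : ι → UnitAddCircle) = h t * m)
    (hcard : Nat.card Λ = p ^ 2) (hne : ∀ i, ∃ t : Λ, t.1 i ≠ 0)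
    (hx : h x = 1) (hord : addOrderOf x = p ^ 2) :
    Fintype.card ι = p ^ 2 * m ∧
      (Λ : Set (ι → UnitAddCircle)) = twoValued Finset.univ '' cyclicPairs p := by
  have h2 : 2 ≤ p ^ 2 := hp.two_le.trans (Nat.le_self_pow two_ne_zero p)
  have hgen (t : Λ) : ∃ n : ℕ, n • x = t :=
    ⟨h t, H.injective (H.apply_nsmul hx (hord ▸ hcard ▸ H.lt_card t))⟩
  have hxi (i : ι) : x.1 i = torsionGen (p ^ 2) := by
    refine (eq_zero_or_eq_torsionGen_of_addOrderOf H hheight h2 hx hord i).resolve_left fun h0 => ?_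
    obtain ⟨t, ht⟩ := hne i
    obtain ⟨n, rfl⟩ := hgen t
    exact ht (by simp [h0])
  have hxS : x.1 = twoValued Finset.univ (torsionGen (p ^ 2), torsionGen p) := by
    ext i
    simp [twoValued_apply, hxi i]
  refine ⟨?_, coe_eq_image_cyclicPairs hp.pos hgen hxS⟩
  have hsum := hheight x
  rw [hxS, torusHeight_twoValued, circleFract_torsionGen h2, hx] at hsum
  have hp0 : (p : ℝ) ≠ 0 := by exact_mod_cast hp.ne_zero
  simp only [Finset.card_univ, Finset.compl_univ, Finset.card_empty] at hsum
  push_cast at hsum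
  field_simp at hsum
  exact_mod_cast (by linarith : (Fintype.card ι : ℝ) = p ^ 2 * m)

/-- Here `S` is the support of `x`. Off `S` the element `y` is `p`-torsion, and it cannot vanish
there because `x` and `y` generate `Λ`; on `S` it is determined by `p y = b x`. -/
lemma exists_eq_twoValued (H : IsSubadditiveNumbering h) (hp : p.Prime)
    (hheight : ∀ t : Λ, torusHeight (t : ι → UnitAddCircle) = h t * m)
    (hcard : Nat.card Λ = p ^ 2) (hne : ∀ i, ∃ t : Λ, t.1 i ≠ 0)
    (hx : h x = 1) (hord : addOrderOf x = p) (hy : h y = p) :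
    ∃ S : Finset ι, ∃ b ≤ 1, x.1 = twoValued S (torsionGen p, 0) ∧
      y.1 = twoValued S (b • torsionGen (p ^ 2), torsionGen p) := by
  obtain ⟨b, hb, hyx⟩ := H.exists_prime_nsmul_eq hp hcard hx hord hy
  have hyxi (i : ι) : p • y.1 i = b • x.1 i := congrFun (congrArg Subtype.val hyx) i
  have hlt := sub_one_mul_add_circleFract_lt_one H hp hheight hcard hx hord hy
  have hx_cases := eq_zero_or_eq_torsionGen_of_addOrderOf H hheight hp.two_le hx hord
  have hon {i : ι} (hi : x.1 i = torsionGen p) : b ≤ 1 ∧ y.1 i = b • torsionGen (p ^ 2) :=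
    eq_nsmul_torsionGen_sq hp.two_le hb (hi ▸ hyxi i) (hi ▸ hlt i)
  have hoff {i : ι} (hi : x.1 i = 0) : y.1 i = torsionGen p := by
    refine (eq_zero_or_eq_torsionGen hp.two_le ?_ ?_).resolve_left fun hy0 => ?_
    · rw [hyxi i, hi, nsmul_zero]
    · simpa [hi, circleFract_zero] using hlt i
    · obtain ⟨t, ht⟩ := hne i
      obtain ⟨j, -, k, -, rfl⟩ := H.exists_eq_nsmul_add_nsmul hp hcard hx hord hy t
      exact ht (by simp [hi, hy0])
  have hsupp : ∃ i, x.1 i ≠ 0 := by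
    by_contra! hx0
    have : x = 0 := Subtype.ext (funext hx0)
    simp [this, H.map_zero] at hx
  obtain ⟨i₀, hi₀⟩ := hsupp
  have hb1 : b ≤ 1 := (hon ((hx_cases i₀).resolve_left hi₀)).1
  classical
  refine ⟨Finset.univ.filter fun i => x.1 i ≠ 0, b, hb1, ?_, ?_⟩ <;> ext i
  all_goals by_cases hi : x.1 i = 0
  · simp [twoValued_apply, hi]
  · simpa [twoValued_apply, hi] using (hx_cases i).resolve_left hi
  · simp [twoValued_apply, hi, hoff]
  · simp [twoValued_apply, hi, (hon ((hx_cases i).resolve_left hi)).2]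

theorem eq_image_pairs_of_addOrderOf_eq_prime (H : IsSubadditiveNumbering h) (hp : p.Prime)
    (hheight : ∀ t : Λ, torusHeight (t : ι → UnitAddCircle) = h t * m)
    (hcard : Nat.card Λ = p ^ 2) (hne : ∀ i, ∃ t : Λ, t.1 i ≠ 0)
    (hx : h x = 1) (hord : addOrderOf x = p) :
    ∃ S : Finset ι, S.card = p * m ∧
      ((Sᶜ.card + m = p ^ 2 * m ∧ (Λ : Set (ι → UnitAddCircle)) = twoValued S '' cyclicPairs p) ∨
        (Sᶜ.card = p ^ 2 * m ∧ (Λ : Set (ι → UnitAddCircle)) = twoValued S '' torsionPairs p)) := by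
  obtain ⟨y, hy⟩ : ∃ y, h y = p := H.exists_eq (by rw [hcard]; nlinarith [hp.two_le])
  obtain ⟨S, b, hb, hxS, hyS⟩ := exists_eq_twoValued H hp hheight hcard hne hx hord hy
  have hgen := H.exists_eq_nsmul_add_nsmul hp hcard hx hord hy
  have hp0 : (p : ℝ) ≠ 0 := by exact_mod_cast hp.ne_zero
  have hS : S.card = p * m := by
    have hsum := hheight x
    rw [hxS, torusHeight_twoValued, hx, circleFract_torsionGen hp.two_le, circleFract_zero,
      mul_zero, add_zero, Nat.cast_one, one_mul] at hsum
    field_simp at hsum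
    exact_mod_cast (by linarith : (S.card : ℝ) = p * m)
  refine ⟨S, hS, ?_⟩
  have hsum := hheight y
  rw [hyS, torusHeight_twoValued, hy, hS, circleFract_torsionGen hp.two_le] at hsum
  push_cast at hsum
  obtain rfl | rfl : b = 0 ∨ b = 1 := by lia
  · simp only [zero_nsmul, circleFract_zero, mul_zero, zero_add] at hsum
    field_simp at hsum
    exact .inr ⟨by exact_mod_cast (by linarith : (Sᶜ.card : ℝ) = p ^ 2 * m),
      coe_eq_image_torsionPairs hp.pos hgen hxS (by simpa using hyS)⟩
  · rw [one_nsmul] at hyS hsum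
    rw [circleFract_torsionGen (hp.two_le.trans (Nat.le_self_pow two_ne_zero p))] at hsum
    push_cast at hsum
    field_simp at hsum
    have hyx : p • y = x := by
      refine Subtype.ext ?_
      rw [AddSubgroup.coe_nsmul, hyS, ← map_nsmul, hxS, Prod.smul_mk, nsmul_torsionGen hp.pos, sq,
        nsmul_torsionGen_mul hp.pos]
    have hcyclic (t : Λ) : ∃ n : ℕ, n • y = t := by
      obtain ⟨i, -, j, -, rfl⟩ := hgen t
      exact ⟨i + j * p, by rw [add_nsmul, mul_nsmul', hyx]⟩
    exact .inl ⟨by exact_mod_cast (by linarith : (Sᶜ.card + m : ℝ) = p ^ 2 * m),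
      coe_eq_image_cyclicPairs hp.pos hcyclic hyS⟩

theorem eq_image_pairs_of_numbering (H : IsSubadditiveNumbering h) (hp : p.Prime)
    (hheight : ∀ t : Λ, torusHeight (t : ι → UnitAddCircle) = h t * m)
    (hcard : Nat.card Λ = p ^ 2) (hne : ∀ i, ∃ t : Λ, t.1 i ≠ 0) :
    (Fintype.card ι = p ^ 2 * m ∧
        (Λ : Set (ι → UnitAddCircle)) = twoValued Finset.univ '' cyclicPairs p) ∨
      ∃ S : Finset ι, S.card = p * m ∧
        ((Sᶜ.card + m = p ^ 2 * m ∧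
            (Λ : Set (ι → UnitAddCircle)) = twoValued S '' cyclicPairs p) ∨
          (Sᶜ.card = p ^ 2 * m ∧
            (Λ : Set (ι → UnitAddCircle)) = twoValued S '' torsionPairs p)) := by
  obtain ⟨x, hx⟩ : ∃ x, h x = 1 :=
    H.exists_eq (hcard ▸ Nat.one_lt_pow two_ne_zero hp.one_lt)
  obtain hord | hord := H.addOrderOf_eq hp hcard hx
  · exact .inr (eq_image_pairs_of_addOrderOf_eq_prime H hp hheight hcard hne hx hord)
  · exact .inl (eq_image_cyclicPairs_univ H hp hheight hcard hne hx hord)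

end Classification

section TorusKernel

variable {ι κ μ A B : Type*} [Fintype ι] [AddCommGroup A] [AddCommGroup B]

/-- The product `t M` of a row vector over an abelian group with an integer matrix. -/
def intVecMul (M : Matrix ι κ ℤ) : (ι → A) →+ (κ → A) where
  toFun t j := ∑ i, M i j • t i
  map_zero' := by ext; simp
  map_add' s t := by ext; simp [Finset.sum_add_distrib]

lemma intVecMul_apply (M : Matrix ι κ ℤ) (t : ι → A) (j : κ) :
    intVecMul M t j = ∑ i, M i j • t i := rfl

lemma intVecMul_mul [Fintype κ] (M : Matrix ι κ ℤ) (N : Matrix κ μ ℤ) (t : ι → A) :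
    intVecMul (M * N) t = intVecMul N (intVecMul M t) := by
  ext j
  simp only [intVecMul_apply, Matrix.mul_apply, Finset.sum_smul, Finset.smul_sum]
  rw [Finset.sum_comm]
  simp only [← mul_smul, mul_comm]

lemma intVecMul_smul_one [DecidableEq ι] (c : ℤ) (t : ι → A) :
    intVecMul (c • (1 : Matrix ι ι ℤ)) t = c • t := by
  ext j
  simp only [intVecMul_apply, Matrix.smul_apply, Matrix.one_apply, smul_eq_mul, mul_ite, mul_one,
    mul_zero, ite_smul, zero_smul, Finset.sum_ite_eq', Finset.mem_univ, if_true, Pi.smul_apply]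

lemma intVecMul_coe (M : Matrix ι κ ℤ) (t : ι → ℝ) (j : κ) :
    intVecMul M (fun i => (t i : UnitAddCircle)) j = ((intVecMul M t j : ℝ) : UnitAddCircle) := by
  simp only [intVecMul_apply]
  exact (map_sum (QuotientAddGroup.mk' (AddSubgroup.zmultiples (1 : ℝ))) _ _).symm

/-- The group of torus points annihilated by an integer matrix. -/
def torusKer (M : Matrix ι κ ℤ) : AddSubgroup (ι → UnitAddCircle) :=
  (intVecMul M).ker

lemma mem_torusKer {M : Matrix ι κ ℤ} {t : ι → UnitAddCircle} :
    t ∈ torusKer M ↔ ∀ j, ∑ i, M i j • t i = 0 :=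
  AddMonoidHom.mem_ker.trans funext_iff

lemma coe_div_mem_torusKer {M : Matrix ι κ ℤ} {z : ι → ℤ} {c : ℤ} (hc : c ≠ 0) :
    (fun i => ((z i / c : ℝ) : UnitAddCircle)) ∈ torusKer M ↔ ∀ j, c ∣ Matrix.vecMul z M j := by
  have hc' : (c : ℝ) ≠ 0 := by exact_mod_cast hc
  refine AddMonoidHom.mem_ker.trans (funext_iff.trans (forall_congr' fun j => ?_))
  have hsum : intVecMul M (fun i => (z i / c : ℝ)) j = (Matrix.vecMul z M j : ℤ) / c := by
    simp [intVecMul_apply, Matrix.vecMul, dotProduct, Finset.sum_div, mul_comm, mul_div_assoc]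
  rw [intVecMul_coe, hsum, Pi.zero_apply, coe_unitAddCircle_eq_zero_iff]
  refine exists_congr fun n => ?_
  rw [eq_div_iff hc', mul_comm, eq_comm]
  exact_mod_cast Iff.rfl

variable [DecidableEq ι] {M : Matrix ι ι ℤ}

lemma finite_torusKer (hM : M.det ≠ 0) : Finite (torusKer M) := by
  have htorsion : {u : UnitAddCircle | M.det.natAbs • u = 0}.Finite :=
    AddCircle.finite_torsion 1 (Int.natAbs_pos.2 hM)
  refine ((Set.Finite.pi fun _ : ι => htorsion).subset fun t ht i _ => ?_).to_subtype
  have hdet : M.det • t = 0 := by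
    rw [← intVecMul_smul_one, ← Matrix.mul_adjugate, intVecMul_mul, AddMonoidHom.mem_ker.1 ht,
      map_zero]
  simpa using congrFun hdet i

lemma exists_mul_eq_of_torusKer_le {N : Matrix ι κ ℤ} (hM : M.det ≠ 0)
    (hle : torusKer M ≤ torusKer N) : ∃ X : Matrix ι κ ℤ, M * X = N := by
  have hdvd (k : ι) (j : κ) : M.det ∣ (M.adjugate * N) k j := by
    refine (coe_div_mem_torusKer (z := M.adjugate k) hM).1
      (hle ((coe_div_mem_torusKer hM).2 fun j => ?_)) j
    exact ⟨(1 : Matrix ι ι ℤ) k j, congrFun (congrFun M.adjugate_mul k) j⟩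
  choose X hX using hdvd
  have hadj : M.adjugate * N = M.det • Matrix.of X := Matrix.ext hX
  have hsmul : M.det • (M * Matrix.of X) = M.det • N := by
    rw [← Matrix.mul_smul, ← hadj, ← Matrix.mul_assoc, Matrix.mul_adjugate, Matrix.smul_mul,
      Matrix.one_mul]
  exact ⟨Matrix.of X, Matrix.ext fun i j => mul_left_cancel₀ hM (congrFun (congrFun hsmul i) j)⟩

lemma det_ne_zero_of_torusKer_le {N : Matrix ι ι ℤ} (hM : M.det ≠ 0)
    (hle : torusKer N ≤ torusKer M) : N.det ≠ 0 := by
  intro hN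
  obtain ⟨z, hz, hzN⟩ := Matrix.exists_vecMul_eq_zero_iff.2 hN
  refine hM (Matrix.exists_vecMul_eq_zero_iff.1 ⟨z, hz, funext fun j => ?_⟩)
  have hdvd : 2 * |Matrix.vecMul z M j| + 1 ∣ Matrix.vecMul z M j :=
    (coe_div_mem_torusKer (by positivity)).1
      (hle ((coe_div_mem_torusKer (by positivity)).2 fun i => by simp [hzN])) j
  exact Int.eq_zero_of_abs_lt_dvd hdvd (by linarith [abs_nonneg (Matrix.vecMul z M j)])

lemma exists_unimodular_mul_eq {N : Matrix ι ι ℤ} (hM : M.det ≠ 0)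
    (hker : torusKer M = torusKer N) : ∃ X : Matrix ι ι ℤ, IsUnit X.det ∧ M * X = N := by
  obtain ⟨X, hX⟩ := exists_mul_eq_of_torusKer_le hM hker.le
  obtain ⟨Y, hY⟩ :=
    exists_mul_eq_of_torusKer_le (det_ne_zero_of_torusKer_le hM hker.ge) hker.ge
  refine ⟨X, .of_mul_eq_one Y.det (mul_left_cancel₀ hM ?_), hX⟩
  rw [← mul_assoc, ← Matrix.det_mul, hX, ← Matrix.det_mul, hY, mul_one]

end TorusKernel

section RelationGroup

/-- A lattice point, viewed as a point of `ℝ^d`. -/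
abbrev realPoint {d : ℕ} (x : Fin d → ℤ) : Fin d → ℝ :=
  fun j => (x j : ℝ)

/-- The convex hull of a family of lattice points. -/
def latticeHull {ι : Type*} {d : ℕ} (V : ι → Fin d → ℤ) : Set (Fin d → ℝ) :=
  convexHull ℝ (Set.range fun i => realPoint (V i))

/-- The matrix of homogeneous coordinates, with rows `(V i, 1)`. -/
def homMat {ι : Type*} {d : ℕ} (V : ι → Fin d → ℤ) : Matrix ι (Fin (d + 1)) ℤ :=
  Matrix.of fun i => Fin.snoc (V i) 1

/-- The group of relations modulo `1` between the vectors `(V i, 1)`, in the torus `(ℝ/ℤ)^ι`.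
For the vertices of a lattice simplex it is the finite group attached to the simplex by Batyrev
and Hofscheier. -/
def relationGroup {ι : Type*} [Fintype ι] {d : ℕ} (V : ι → Fin d → ℤ) :
    AddSubgroup (ι → UnitAddCircle) :=
  torusKer (homMat V)

lemma homMat_castSucc {ι : Type*} {d : ℕ} (V : ι → Fin d → ℤ) (i : ι) (j : Fin d) :
    homMat V i j.castSucc = V i j :=
  Fin.snoc_castSucc (α := fun _ => ℤ) 1 (V i) j

lemma homMat_last {ι : Type*} {d : ℕ} (V : ι → Fin d → ℤ) (i : ι) :
    homMat V i (Fin.last d) = 1 :=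
  Fin.snoc_last (α := fun _ => ℤ) 1 (V i)

lemma mem_relationGroup {ι : Type*} [Fintype ι] {d : ℕ} {V : ι → Fin d → ℤ}
    {t : ι → UnitAddCircle} :
    t ∈ relationGroup V ↔ (∀ j, ∑ i, V i j • t i = 0) ∧ ∑ i, t i = 0 := by
  simp only [relationGroup, mem_torusKer, Fin.forall_fin_succ', homMat_castSucc, homMat_last,
    one_zsmul]

variable {d : ℕ} {V V' : Fin (d + 1) → Fin d → ℤ}

lemma det_homMat_ne_zero (hV : AffineIndependent ℝ fun i => realPoint (V i)) :
    (homMat V).det ≠ 0 := by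
  intro hdet
  obtain ⟨z, hz0, hz⟩ := Matrix.exists_vecMul_eq_zero_iff.2 hdet
  have hcoord (j : Fin d) : ∑ i, z i * V i j = 0 := by
    simpa [Matrix.vecMul, dotProduct, homMat_castSucc] using congrFun hz j.castSucc
  have hsum : ∑ i, z i = 0 := by
    simpa [Matrix.vecMul, dotProduct, homMat_last] using congrFun hz (Fin.last d)
  refine hz0 (funext fun i => (Int.cast_eq_zero (α := ℝ)).1 ?_)
  refine (affineIndependent_iff.1 hV) Finset.univ (fun i => (z i : ℝ)) (by exact_mod_cast hsum)
    (funext fun j => ?_) i (Finset.mem_univ i)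
  simpa using congrArg (Int.cast (R := ℝ)) (hcoord j)

/-- The affine map `x ↦ x U + w`. -/
def vecMulAffine (U : Matrix (Fin d) (Fin d) ℤ) (w : Fin d → ℤ) :
    (Fin d → ℝ) →ᵃ[ℝ] (Fin d → ℝ) :=
  (Matrix.vecMulLinear (U.map fun a : ℤ => (a : ℝ))).toAffineMap + AffineMap.const ℝ _ (realPoint w)

lemma vecMulAffine_realPoint (U : Matrix (Fin d) (Fin d) ℤ) (w x : Fin d → ℤ) :
    vecMulAffine U w (realPoint x) = realPoint (Matrix.vecMul x U + w) := by
  ext j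
  simp [vecMulAffine, realPoint, Matrix.vecMul, dotProduct]

lemma unimodEquiv_of_vecMul {ι : Type*} {V V' : ι → Fin d → ℤ} {U : Matrix (Fin d) (Fin d) ℤ}
    {w : Fin d → ℤ} (hU : IsUnit U.det) (h : ∀ i, Matrix.vecMul (V i) U + w = V' i) :
    UnimodEquiv (latticeHull V) (latticeHull V') := by
  refine ⟨U, w, hU, ?_⟩
  change latticeHull V' = vecMulAffine U w '' latticeHull V
  rw [latticeHull, latticeHull, AffineMap.image_convexHull, ← Set.range_comp]
  simp only [Function.comp_def, vecMulAffine_realPoint, h]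

lemma unimodEquiv_of_homMat_mul_eq {X : Matrix (Fin (d + 1)) (Fin (d + 1)) ℤ}
    (hV : (homMat V).det ≠ 0) (hX : IsUnit X.det) (hVX : homMat V * X = homMat V') :
    UnimodEquiv (latticeHull V) (latticeHull V') := by
  have hcol (i : Fin (d + 1)) :
      X i (Fin.last d) = (1 : Matrix (Fin (d + 1)) (Fin (d + 1)) ℤ) i (Fin.last d) := by
    have hmulVec : (homMat V).mulVec (X.col (Fin.last d) -
        (1 : Matrix (Fin (d + 1)) (Fin (d + 1)) ℤ).col (Fin.last d)) = 0 := by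
      ext k
      rw [Matrix.mulVec_sub]
      change (homMat V * X) k (Fin.last d) -
        (homMat V * (1 : Matrix (Fin (d + 1)) (Fin (d + 1)) ℤ)) k (Fin.last d) = 0
      rw [hVX, mul_one, homMat_last, homMat_last, sub_self]
    exact sub_eq_zero.1 (congrFun (Matrix.eq_zero_of_mulVec_eq_zero hV hmulVec) i)
  refine unimodEquiv_of_vecMul (U := X.submatrix Fin.castSucc Fin.castSucc)
    (w := fun j => X (Fin.last d) j.castSucc) ?_ fun i => funext fun j => ?_
  · rw [Matrix.det_succ_column X (Fin.last d), Fin.sum_univ_castSucc] at hX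
    simpa [hcol, Matrix.one_apply, ← two_mul, Fin.succAbove_last] using hX
  · rw [← homMat_castSucc V', ← hVX, Matrix.mul_apply, Fin.sum_univ_castSucc]
    simp [homMat_castSucc, homMat_last, Matrix.vecMul, dotProduct]

theorem unimodEquiv_of_relationGroup_eq (hV : (homMat V).det ≠ 0)
    (h : relationGroup V = relationGroup V') : UnimodEquiv (latticeHull V) (latticeHull V') := by
  obtain ⟨X, hX, hVX⟩ := exists_unimodular_mul_eq hV h
  exact unimodEquiv_of_homMat_mul_eq hV hX hVX

lemma latticeHull_comp_equiv {ι κ : Type*} (V : ι → Fin d → ℤ) (σ : κ ≃ ι) :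
    latticeHull (V ∘ σ) = latticeHull V :=
  congrArg (convexHull ℝ) (σ.surjective.range_comp fun i => realPoint (V i))

lemma mem_relationGroup_comp_equiv {ι κ : Type*} [Fintype ι] [Fintype κ] {V : ι → Fin d → ℤ}
    (σ : κ ≃ ι) {t : κ → UnitAddCircle} :
    t ∈ relationGroup (V ∘ σ) ↔ t ∘ σ.symm ∈ relationGroup V := by
  have hcoord (j : Fin d) : ∑ i, V i j • t (σ.symm i) = ∑ k, V (σ k) j • t k := by
    simpa using σ.symm.sum_comp fun k => V (σ k) j • t k
  simp only [mem_relationGroup, Function.comp_apply, hcoord, σ.symm.sum_comp t]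

lemma exists_perm_mem_iff {ι : Type*} [Finite ι] {S T : Finset ι}
    (h : S.card = T.card) : ∃ σ : Equiv.Perm ι, ∀ i, σ i ∈ T ↔ i ∈ S := by
  classical
  cases nonempty_fintype ι
  let f : {i // i ∈ S} ≃ {i // i ∈ T} := Fintype.equivOfCardEq (by simpa using h)
  refine ⟨f.extendSubtype, fun i => ⟨fun hi => ?_, fun hi => f.extendSubtype_mem i hi⟩⟩
  by_contra hS
  exact f.extendSubtype_not_mem i hS hi

theorem unimodEquiv_of_relationGroup_eq_image {P : Set (UnitAddCircle × UnitAddCircle)}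
    {S T : Finset (Fin (d + 1))} (hV : (homMat V).det ≠ 0) (hST : S.card = T.card)
    (hS : (relationGroup V : Set (Fin (d + 1) → UnitAddCircle)) = twoValued S '' P)
    (hT : (relationGroup V' : Set (Fin (d + 1) → UnitAddCircle)) = twoValued T '' P) :
    UnimodEquiv (latticeHull V) (latticeHull V') := by
  obtain ⟨σ, hσ⟩ := exists_perm_mem_iff hST
  have hcomp (a : UnitAddCircle × UnitAddCircle) : twoValued T a ∘ σ = twoValued S a := by
    ext i
    simp only [Function.comp_apply, twoValued_apply, hσ]
  rw [← latticeHull_comp_equiv V' σ]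
  refine unimodEquiv_of_relationGroup_eq hV (SetLike.coe_injective ?_)
  ext t
  rw [hS, SetLike.mem_coe, mem_relationGroup_comp_equiv, ← SetLike.mem_coe, hT]
  simp only [Set.mem_image, σ.eq_comp_symm, hcomp]

end RelationGroup

section Ehrhart

lemma convexHull_range_eq_image_stdSimplex {ι E : Type*} [Fintype ι] [AddCommGroup E] [Module ℝ E]
    (v : ι → E) :
    convexHull ℝ (Set.range v) = Fintype.linearCombination ℝ v '' stdSimplex ℝ ι := by
  classical
  rw [← convexHull_basis_eq_stdSimplex, LinearMap.image_convexHull, ← Set.range_comp]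
  congr 2
  funext i
  simp [Fintype.linearCombination_apply, ite_smul]

lemma mem_smul_convexHull_range {ι E : Type*} [Fintype ι] [Nonempty ι] [AddCommGroup E]
    [Module ℝ E] {v : ι → E} {c : ℝ} (hc : 0 ≤ c) {x : E} :
    x ∈ c • convexHull ℝ (Set.range v) ↔
      ∃ t : ι → ℝ, (∀ i, 0 ≤ t i) ∧ ∑ i, t i = c ∧ ∑ i, t i • v i = x := by
  classical
  rw [convexHull_range_eq_image_stdSimplex, ← Set.image_smul, Set.image_image]
  constructor
  · rintro ⟨w, ⟨hw0, hw1⟩, rfl⟩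
    exact ⟨c • w, fun i => mul_nonneg hc (hw0 i), by simp [← Finset.mul_sum, hw1],
      by simp [Fintype.linearCombination_apply, Finset.smul_sum, mul_smul]⟩
  · rintro ⟨t, ht0, ht1, rfl⟩
    rcases hc.eq_or_lt with rfl | hc
    · have ht (i : ι) : t i = 0 :=
        (Finset.sum_eq_zero_iff_of_nonneg fun i _ => ht0 i).1 ht1 i (Finset.mem_univ i)
      exact ⟨_, single_mem_stdSimplex ℝ (Classical.arbitrary ι), by simp [ht]⟩
    · refine ⟨c⁻¹ • t, ⟨fun i => mul_nonneg (by positivity) (ht0 i), ?_⟩, ?_⟩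
      · simp [← Finset.mul_sum, ht1, hc.ne']
      · change c • Fintype.linearCombination ℝ v (c⁻¹ • t) = _
        rw [← map_smul, smul_inv_smul₀ hc.ne', Fintype.linearCombination_apply]

lemma mem_smul_latticeHull {d : ℕ} {V : Fin (d + 1) → Fin d → ℤ} {n : ℕ} {x : Fin d → ℝ} :
    x ∈ (n : ℝ) • latticeHull V ↔
      ∃ t : Fin (d + 1) → ℝ, (∀ i, 0 ≤ t i) ∧ ∑ i, t i = n ∧
        intVecMul (homMat V) t = Fin.snoc (α := fun _ => ℝ) x (n : ℝ) := by
  rw [latticeHull, mem_smul_convexHull_range n.cast_nonneg]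
  refine exists_congr fun t => and_congr_right fun _ => and_congr_right fun hsum => ?_
  simp [funext_iff, Fin.forall_fin_succ', intVecMul_apply, homMat_castSucc, homMat_last, hsum,
    mul_comm]

/-- The vectors of sum `n` in the nonnegative orthant that lie in the group `Λ` modulo `ℤ^ι`. -/
def coneSlice {ι : Type*} [Fintype ι] (Λ : AddSubgroup (ι → UnitAddCircle)) (n : ℕ) :
    Set (ι → ℝ) :=
  {t | (fun i => (t i : UnitAddCircle)) ∈ Λ ∧ (∀ i, 0 ≤ t i) ∧ ∑ i, t i = n}

lemma intVecMul_injective {ι : Type*} [Fintype ι] [DecidableEq ι] {M : Matrix ι ι ℤ}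
    (hM : M.det ≠ 0) : Function.Injective (intVecMul M : (ι → ℝ) →+ (ι → ℝ)) := by
  refine (injective_iff_map_eq_zero _).2 fun t ht => (smul_eq_zero.1 ?_).resolve_left hM
  rw [← intVecMul_smul_one, ← Matrix.mul_adjugate, intVecMul_mul, ht, map_zero]

lemma latticePointCount_smul_latticeHull {d : ℕ} {V : Fin (d + 1) → Fin d → ℤ}
    (hV : (homMat V).det ≠ 0) (n : ℕ) :
    latticePointCount ((n : ℝ) • latticeHull V) = (coneSlice (relationGroup V) n).ncard := by
  let lift (x : Fin d → ℤ) : Fin (d + 1) → ℝ := Fin.snoc (α := fun _ => ℝ) (realPoint x) (n : ℝ)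
  have hlift : Function.Injective lift := fun x y hxy => funext fun j => by
    simpa [lift] using congrFun hxy j.castSucc
  rw [latticePointCount, ← Set.ncard_image_of_injective _ hlift,
    ← Set.ncard_image_of_injective (coneSlice _ n) (intVecMul_injective hV)]
  congr 1
  ext y
  constructor
  · rintro ⟨x, hx, rfl⟩
    obtain ⟨t, ht0, hsum, hmul⟩ := mem_smul_latticeHull.1 hx
    refine ⟨t, ⟨funext fun j => ?_, ht0, hsum⟩, hmul⟩
    rw [intVecMul_coe, hmul]
    refine Fin.lastCases ?_ (fun j => ?_) j
    · exact coe_unitAddCircle_eq_zero_iff.2 ⟨n, by simp⟩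
    · exact coe_unitAddCircle_eq_zero_iff.2 ⟨x j, by simp⟩
  · rintro ⟨t, ⟨hmem, ht0, hsum⟩, rfl⟩
    have hint (j : Fin (d + 1)) : ∃ z : ℤ, (z : ℝ) = intVecMul (homMat V) t j :=
      coe_unitAddCircle_eq_zero_iff.1 ((intVecMul_coe _ t j).symm.trans (congrFun hmem j))
    choose z hz using hint
    have hmul : intVecMul (homMat V) t = lift fun j => z j.castSucc := by
      ext j
      refine Fin.lastCases ?_ (fun j => ?_) j
      · simp [lift, intVecMul_apply, homMat_last, hsum]
      · simp [lift, hz]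
    exact ⟨_, mem_smul_latticeHull.2 ⟨t, ht0, hsum, hmul⟩, hmul.symm⟩

lemma card_natVec_add_sum_eq (d b n : ℕ) :
    Nat.card {u : Fin (d + 1) → ℕ // b + ∑ i, u i = n} =
      if b ≤ n then (n - b + d).choose d else 0 := by
  split_ifs with hbn
  · have hiff (u : Fin (d + 1) → ℕ) : b + ∑ i, u i = n ↔ ∑ i, u i = n - b := by lia
    rw [Nat.card_congr (Equiv.subtypeEquivRight hiff),
      ← Nat.card_congr (Sym.equivNatSumOfFintype (Fin (d + 1)) (n - b)), Nat.card_eq_fintype_card,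
      Sym.card_sym_eq_choose, Fintype.card_fin, show d + 1 + (n - b) - 1 = n - b + d by lia]
    exact Nat.choose_symm_add
  · have : IsEmpty {u : Fin (d + 1) → ℕ // b + ∑ i, u i = n} :=
      ⟨fun u => hbn (u.2 ▸ Nat.le_add_right _ _)⟩
    exact Nat.card_of_isEmpty

lemma finite_natVec_add_sum_eq {ι : Type*} [Fintype ι] (b n : ℕ) :
    Finite {u : ι → ℕ // b + ∑ i, u i = n} :=
  Set.Finite.subset (Set.Finite.pi' fun _ => Set.finite_Iic n) fun _ hu i =>
    (Finset.single_le_sum (fun _ _ => Nat.zero_le _) (Finset.mem_univ i)).trans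
      ((Nat.le_add_left _ b).trans_eq hu)

section BoxDecomposition

variable {ι : Type*} [Fintype ι] {Λ : AddSubgroup (ι → UnitAddCircle)} {f : Λ → ℕ}

lemma coe_circleFract_add_natCast (a : UnitAddCircle) (u : ℕ) :
    ((circleFract a + u : ℝ) : UnitAddCircle) = a := by
  rw [AddCircle.coe_add, coe_circleFract, add_eq_left, coe_unitAddCircle_eq_zero_iff]
  exact ⟨u, by simp⟩

lemma sum_circleFract_add_natCast (hf : ∀ t : Λ, torusHeight (t : ι → UnitAddCircle) = f t)
    (t : Λ) (u : ι → ℕ) : ∑ i, (circleFract (t.1 i) + u i) = (f t + ∑ i, u i : ℕ) := by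
  rw [Finset.sum_add_distrib, ← torusHeight, hf]
  push_cast
  rfl

lemma ncard_coneSlice (hf : ∀ t : Λ, torusHeight (t : ι → UnitAddCircle) = f t) (n : ℕ) :
    (coneSlice Λ n).ncard = Nat.card (Σ t : Λ, {u : ι → ℕ // f t + ∑ i, u i = n}) := by
  let F (x : Σ t : Λ, {u : ι → ℕ // f t + ∑ i, u i = n}) (i : ι) : ℝ :=
    circleFract (x.1.1 i) + x.2.1 i
  have hF : Function.Injective F := by
    rintro ⟨t, u, hu⟩ ⟨t', u', hu'⟩ h
    obtain rfl : t = t' := Subtype.ext <| funext fun i => by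
      simpa only [F, coe_circleFract_add_natCast] using
        congrArg (fun x : ℝ => (x : UnitAddCircle)) (congrFun h i)
    obtain rfl : u = u' := funext fun i => by simpa [F] using congrFun h i
    rfl
  rw [← Set.ncard_range_of_injective hF]
  congr 1
  ext t
  constructor
  · rintro ⟨hmem, ht0, hsum⟩
    have hsplit (i : ι) : circleFract (t i : UnitAddCircle) + (⌊t i⌋₊ : ℝ) = t i := by
      rw [circleFract_coe, natCast_floor_eq_intCast_floor (ht0 i), Int.fract_add_floor]
    refine ⟨⟨⟨_, hmem⟩, fun i => ⌊t i⌋₊, ?_⟩, funext hsplit⟩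
    have hheight := sum_circleFract_add_natCast hf ⟨_, hmem⟩ fun i => ⌊t i⌋₊
    simp only [hsplit, hsum] at hheight
    exact_mod_cast hheight.symm
  · rintro ⟨⟨t, u, hu⟩, rfl⟩
    refine ⟨?_, fun i => add_nonneg (circleFract_nonneg _) (Nat.cast_nonneg _), ?_⟩
    · simp only [F, coe_circleFract_add_natCast]
      exact t.2
    · rw [sum_circleFract_add_natCast hf, hu]

end BoxDecomposition

section EhrhartGroup

variable {d : ℕ} {V : Fin (d + 1) → Fin d → ℤ}

lemma exists_torusHeight_eq_natCast {t : Fin (d + 1) → UnitAddCircle} (ht : t ∈ relationGroup V) :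
    ∃ b : ℕ, torusHeight t = b := by
  have hcoe : ((torusHeight t : ℝ) : UnitAddCircle) = ∑ i, t i :=
    (map_sum (QuotientAddGroup.mk' (AddSubgroup.zmultiples (1 : ℝ))) _ _).trans
      (Finset.sum_congr rfl fun i _ => coe_circleFract (t i))
  rw [(mem_relationGroup.1 ht).2, coe_unitAddCircle_eq_zero_iff] at hcoe
  obtain ⟨z, hz⟩ := hcoe
  lift z to ℕ using by exact_mod_cast hz.symm ▸ torusHeight_nonneg t
  exact ⟨z, by exact_mod_cast hz.symm⟩

theorem latticePointCount_smul_latticeHull_eq_sum [Fintype (relationGroup V)]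
    (hV : (homMat V).det ≠ 0) {f : relationGroup V → ℕ}
    (hf : ∀ t : relationGroup V, torusHeight (t : Fin (d + 1) → UnitAddCircle) = f t) (n : ℕ) :
    latticePointCount ((n : ℝ) • latticeHull V) =
      ∑ t, if f t ≤ n then (n - f t + d).choose d else 0 := by
  have (t : relationGroup V) := finite_natVec_add_sum_eq (ι := Fin (d + 1)) (f t) n
  rw [latticePointCount_smul_latticeHull hV, ncard_coneSlice hf, Nat.card_sigma]
  simp only [card_natVec_add_sum_eq]

end EhrhartGroup

lemma sum_choose_eq_sum_card_fiber {α : Type*} [Fintype α] (f : α → ℕ) (d n : ℕ) :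
    ∑ a, (if f a ≤ n then (n - f a + d).choose d else 0) =
      ∑ b ∈ Finset.range (n + 1), Fintype.card {a // f a = b} * (n - b + d).choose d := by
  simp only [Fintype.card_subtype, Finset.card_filter, Finset.sum_mul]
  rw [Finset.sum_comm]
  simp [ite_mul]

section ChooseSums

variable {α β : Type*} [Fintype α] [Fintype β] {f : α → ℕ} {g : β → ℕ} {d : ℕ}

lemma card_fiber_eq_of_sum_choose_eq
    (h : ∀ n, ∑ a, (if f a ≤ n then (n - f a + d).choose d else 0) =
      ∑ b, if g b ≤ n then (n - g b + d).choose d else 0) (n : ℕ) :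
    Fintype.card {a // f a = n} = Fintype.card {b // g b = n} := by
  induction n using Nat.strong_induction_on with
  | _ n ih =>
    have hn := h n
    rw [sum_choose_eq_sum_card_fiber, sum_choose_eq_sum_card_fiber, Finset.sum_range_succ,
      Finset.sum_range_succ,
      Finset.sum_congr rfl fun x hx => by rw [ih x (Finset.mem_range.1 hx)]] at hn
    simpa using hn

lemma exists_equiv_of_sum_choose_eq
    (h : ∀ n, ∑ a, (if f a ≤ n then (n - f a + d).choose d else 0) =
      ∑ b, if g b ≤ n then (n - g b + d).choose d else 0) :
    ∃ e : α ≃ β, ∀ a, g (e a) = f a :=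
  ⟨Equiv.ofFiberEquiv fun n => Fintype.equivOfCardEq (card_fiber_eq_of_sum_choose_eq h n),
    Equiv.ofFiberEquiv_map _⟩

end ChooseSums

theorem exists_isSubadditiveNumbering {d q k : ℕ} {V : Fin (d + 1) → Fin d → ℤ}
    (hV : (homMat V).det ≠ 0) (hδ : HasDeltaPolySimplex d q k (latticeHull V)) :
    Nat.card (relationGroup V) = q ∧ ∃ h : relationGroup V → ℕ, IsSubadditiveNumbering h ∧
      ∀ t : relationGroup V,
        torusHeight (t : Fin (d + 1) → UnitAddCircle) = h t * (k + 1 : ℕ) := by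
  have := finite_torusKer hV
  have : Fintype (relationGroup V) := Fintype.ofFinite (torusKer (homMat V))
  choose f hf using fun t : relationGroup V => exists_torusHeight_eq_natCast t.2
  obtain ⟨e, he⟩ : ∃ e : relationGroup V ≃ Fin q, ∀ t, (e t : ℕ) * (k + 1) = f t :=
    exists_equiv_of_sum_choose_eq (g := fun j : Fin q => (j : ℕ) * (k + 1)) (d := d) fun n => by
      rw [← latticePointCount_smul_latticeHull_eq_sum hV hf, hδ n, Finset.sum_range]
  have hcard : Nat.card (relationGroup V) = q := by rw [Nat.card_congr e, Nat.card_fin]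
  have hheight (t : relationGroup V) :
      torusHeight (t : Fin (d + 1) → UnitAddCircle) = (e t : ℕ) * (k + 1 : ℕ) := by
    rw [hf, ← he, Nat.cast_mul]
  refine ⟨hcard, fun t => e t, ⟨Fin.val_injective.comp e.injective, fun t => ?_, fun s t => ?_⟩,
    hheight⟩
  · rw [hcard]
    exact (e t).2
  · have hadd := torusHeight_add_le (s : Fin (d + 1) → UnitAddCircle) t
    rw [← AddSubgroup.coe_add, hheight, hheight, hheight, ← add_mul] at hadd
    exact le_of_mul_le_mul_right (by exact_mod_cast hadd) k.succ_pos

end Ehrhart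

section Pyramid

lemma exists_basis_coord_last_eq {R M : Type*} [CommRing R] [IsDomain R] [IsPrincipalIdealRing R]
    [AddCommGroup M] [Module R M] [Module.Free R M] [Module.Finite R M] {n : ℕ}
    (hn : Module.finrank R M = n + 1) (φ : Module.Dual R M) {u : M} (hu : φ u = 1) :
    ∃ B : Module.Basis (Fin (n + 1)) R M, B.coord (Fin.last n) = φ := by
  have hrank : Module.finrank R (LinearMap.ker φ) = n := by
    have hsurj : Function.Surjective φ := fun c => ⟨c • u, by simp [hu]⟩
    have hadd := (LinearMap.ker φ).finrank_quotient_add_finrank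
    rw [(φ.quotKerEquivOfSurjective hsurj).finrank_eq, Module.finrank_self, hn] at hadd
    lia
  let b := Module.finBasisOfFinrankEq R (LinearMap.ker φ) hrank
  have hli (c : R) (x : M) (hx : x ∈ LinearMap.ker φ) (h : c • u + x = 0) : c = 0 := by
    simpa [hu, LinearMap.mem_ker.1 hx] using congrArg φ h
  let B := Module.Basis.mkFinSnoc b u hli fun z => ⟨-φ z, by simp [hu]⟩
  have hlast : B (Fin.last n) = u := by simp [B]
  have hcastSucc (j : Fin n) : B j.castSucc = b j := by simp [B]
  refine ⟨B, B.ext fun j => ?_⟩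
  rw [Module.Basis.coord_apply, Module.Basis.repr_self]
  refine Fin.lastCases ?_ (fun j => ?_) j
  · rw [hlast, hu, Finsupp.single_eq_same]
  · rw [hcastSucc, LinearMap.mem_ker.1 (b j).2,
      Finsupp.single_eq_of_ne (Fin.castSucc_ne_last j).symm]

lemma exists_unimodular_last_eq {n : ℕ} (φ : Module.Dual ℤ (Fin (n + 1) → ℤ))
    {u : Fin (n + 1) → ℤ} (hu : φ u = 1) :
    ∃ U : Matrix (Fin (n + 1)) (Fin (n + 1)) ℤ, IsUnit U.det ∧
      ∀ x, Matrix.vecMul x U (Fin.last n) = φ x := by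
  obtain ⟨B, hB⟩ := exists_basis_coord_last_eq (n := n) (by simp) φ hu
  refine ⟨(LinearMap.toMatrix' (B.equivFun : _ →ₗ[ℤ] _)).transpose, ?_, fun x => ?_⟩
  · rw [Matrix.det_transpose, LinearMap.det_toMatrix']
    exact LinearEquiv.isUnit_det' _
  · rw [Matrix.vecMul_transpose, LinearMap.toMatrix'_mulVec, ← hB]
    rfl

lemma vecMulAffine_injective {d : ℕ} {U : Matrix (Fin d) (Fin d) ℤ} (hU : IsUnit U.det)
    (w : Fin d → ℤ) : Function.Injective (vecMulAffine U w) := by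
  have hU' : IsUnit (U.map fun a : ℤ => (a : ℝ)) :=
    ((Matrix.isUnit_iff_isUnit_det U).2 hU).map (Int.castRingHom ℝ).mapMatrix
  exact fun x y h => Matrix.vecMul_injective_of_isUnit hU' (add_right_cancel h)

lemma affineIndependent_vecMul {ι : Type*} {d : ℕ} {V : ι → Fin d → ℤ}
    {U : Matrix (Fin d) (Fin d) ℤ} (hV : AffineIndependent ℝ fun i => realPoint (V i))
    (hU : IsUnit U.det) (w : Fin d → ℤ) :
    AffineIndependent ℝ fun i => realPoint (Matrix.vecMul (V i) U + w) := by
  simpa only [Function.comp_def, vecMulAffine_realPoint] using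
    hV.map' (vecMulAffine U w) (vecMulAffine_injective hU w)

/-- The inclusion of `ℝ^e` in `ℝ^(e+1)` as the hyperplane of vectors with last coordinate `0`. -/
def snocZero (e : ℕ) : (Fin e → ℝ) →ₗ[ℝ] (Fin (e + 1) → ℝ) where
  toFun x := Fin.snoc (α := fun _ => ℝ) x 0
  map_add' x y := by
    ext j
    refine Fin.lastCases ?_ (fun j => ?_) j <;> simp
  map_smul' c x := by
    ext j
    refine Fin.lastCases ?_ (fun j => ?_) j <;> simp

lemma realPoint_snoc {e : ℕ} (x : Fin e → ℤ) (z : ℤ) :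
    realPoint (Fin.snoc (α := fun _ => ℤ) x z) =
      Fin.snoc (α := fun _ => ℝ) (realPoint x) (z : ℝ) := by
  ext j
  refine Fin.lastCases ?_ (fun j => ?_) j <;> simp

lemma snocZero_realPoint {e : ℕ} (x : Fin e → ℤ) :
    snocZero e (realPoint x) = realPoint (Fin.snoc (α := fun _ => ℤ) x 0) := by
  rw [realPoint_snoc, Int.cast_zero]
  rfl

lemma pyr_latticeHull {n e : ℕ} {V : Fin (n + 1) → Fin (e + 1) → ℤ} {q : Fin n → Fin e → ℤ}
    {i : Fin (n + 1)} (hapex : V i = Fin.snoc (α := fun _ => ℤ) 0 1)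
    (hbase : ∀ j, V (i.succAbove j) = Fin.snoc (α := fun _ => ℤ) (q j) 0) :
    Pyr (latticeHull q) = latticeHull V := by
  have hapex' : (Fin.snoc (0 : Fin e → ℝ) 1 : Fin (e + 1) → ℝ) = realPoint (V i) := by
    rw [hapex, realPoint_snoc, Int.cast_one]
    exact congrArg (fun x => Fin.snoc (α := fun _ => ℝ) x (1 : ℝ))
      (funext fun _ => Int.cast_zero.symm)
  change convexHull ℝ (snocZero e '' latticeHull q ∪ {Fin.snoc (0 : Fin e → ℝ) 1}) = _
  rw [latticeHull, LinearMap.image_convexHull, convexHull_convexHull_union_left, latticeHull,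
    ← Set.range_comp, hapex']
  congr 1
  ext x
  simp only [Set.mem_union, Set.mem_range, Set.mem_singleton_iff, Function.comp_apply,
    snocZero_realPoint, ← hbase, i.exists_iff_succAbove, or_comm, eq_comm]

lemma exists_dual_eq_single {d : ℕ} {V : Fin (d + 1) → Fin d → ℤ} (hV : (homMat V).det ≠ 0)
    {i : Fin (d + 1)} (hi : ∀ t ∈ relationGroup V, t i = 0) :
    ∃ (φ : Module.Dual ℤ (Fin d → ℤ)) (c : ℤ), ∀ j,
      φ (V j) + c = (Pi.single i 1 : Fin (d + 1) → ℤ) j := by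
  let N : Matrix (Fin (d + 1)) Unit ℤ := Matrix.of fun j _ => (Pi.single i 1 : Fin (d + 1) → ℤ) j
  have hle : torusKer (homMat V) ≤ torusKer N := fun t ht =>
    mem_torusKer.2 fun _ => by simpa [N, Pi.single_apply, ite_smul] using hi t ht
  obtain ⟨X, hX⟩ := exists_mul_eq_of_torusKer_le hV hle
  refine ⟨Fintype.linearCombination ℤ fun k => X k.castSucc (), X (Fin.last d) (), fun j => ?_⟩
  have hj := congrFun (congrFun hX j) ()
  rw [Matrix.mul_apply, Fin.sum_univ_castSucc] at hj
  simpa [homMat_castSucc, homMat_last, Fintype.linearCombination_apply, N] using hj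

theorem exists_unimodEquiv_pyr {e : ℕ} {V : Fin (e + 2) → Fin (e + 1) → ℤ}
    (hV : AffineIndependent ℝ fun i => realPoint (V i)) {i : Fin (e + 2)}
    (hi : ∀ t ∈ relationGroup V, t i = 0) :
    ∃ Q : Set (Fin e → ℝ), IsLatticeSimplex Q ∧ UnimodEquiv (latticeHull V) (Pyr Q) := by
  obtain ⟨φ, c, hφ⟩ := exists_dual_eq_single (det_homMat_ne_zero hV) hi
  have hapex : φ (V i) + c = 1 := by simpa using hφ i
  have hbase (j : Fin (e + 1)) : φ (V (i.succAbove j)) + c = 0 := by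
    simpa [Fin.succAbove_ne] using hφ (i.succAbove j)
  obtain ⟨U, hU, hlast⟩ := exists_unimodular_last_eq φ (u := V i - V (i.succAbove 0)) (by
    rw [map_sub]
    linarith [hbase 0])
  let apex : Fin (e + 1) → ℤ := Fin.snoc (α := fun _ => ℤ) 0 1
  let w : Fin (e + 1) → ℤ := apex - Matrix.vecMul (V i) U
  let q (j : Fin (e + 1)) : Fin e → ℤ := Fin.init (Matrix.vecMul (V (i.succAbove j)) U + w)
  have hq (j : Fin (e + 1)) :
      Matrix.vecMul (V (i.succAbove j)) U + w = Fin.snoc (α := fun _ => ℤ) (q j) 0 := by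
    have hzero : (Matrix.vecMul (V (i.succAbove j)) U + w) (Fin.last e) = 0 := by
      simp only [w, apex, Pi.add_apply, Pi.sub_apply, hlast, Fin.snoc_last]
      linarith [hbase j]
    rw [← hzero]
    exact (Fin.snoc_init_self _).symm
  refine ⟨latticeHull q, ⟨q, AffineIndependent.of_comp (snocZero e).toAffineMap ?_, rfl⟩, ?_⟩
  · simpa [Function.comp_def, snocZero_realPoint, hq] using
      (affineIndependent_vecMul hV hU w).comp_embedding i.succAboveEmb
  · rw [pyr_latticeHull (V := fun j => Matrix.vecMul (V j) U + w) (by simp [w, apex]) hq]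
    exact unimodEquiv_of_vecMul hU fun _ => rfl

end Pyramid

section SimplexA

variable {e : ℕ}

lemma latticeHull_cons_zero {d : ℕ} {f : Fin d → Fin d → ℝ} {R : Fin d → Fin d → ℤ}
    (h : ∀ i j, f i j = R i j) :
    convexHull ℝ (insert 0 (Set.range f)) = latticeHull (Fin.cons 0 R : Fin (d + 1) → _) := by
  rw [latticeHull, ← Fin.range_cons]
  congr 2
  funext i j
  refine Fin.cases ?_ (fun i => ?_) i
  · simp [realPoint]
  · simp [h]

lemma single_one_apply_eq_intCast {d : ℕ} (i j : Fin d) :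
    (Pi.single i 1 : Fin d → ℝ) j = ((if i = j then 1 else 0 : ℤ) : ℝ) := by
  simp [Pi.single_apply, eq_comm (a := j)]

lemma mem_relationGroup_cons_zero {d : ℕ} {R : Fin d → Fin d → ℤ}
    {t : Fin (d + 1) → UnitAddCircle} :
    t ∈ relationGroup (Fin.cons 0 R : Fin (d + 1) → _) ↔
      (∀ j, ∑ i, R i j • t i.succ = 0) ∧ ∑ i, t i = 0 := by
  simp only [mem_relationGroup, Fin.sum_univ_succ (n := d), Fin.cons_zero, Fin.cons_succ,
    Pi.zero_apply, zero_zsmul, zero_add]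

lemma eq_of_sum_eq_of_succ_eq {M : Type*} [AddCommGroup M] {d : ℕ} {t u : Fin (d + 1) → M}
    (hsum : ∑ i, t i = ∑ i, u i) (hsucc : ∀ j : Fin d, t j.succ = u j.succ) : t = u := by
  simp only [Fin.sum_univ_succ, hsucc, add_left_inj] at hsum
  exact funext (Fin.cases hsum hsucc)

/-- The nonzero vertices of `Δ(A)`. -/
def rowsA (A : Fin (e + 1) → ℤ) (i j : Fin (e + 1)) : ℤ :=
  (if i = Fin.last e then A (Fin.last e) - (if j = Fin.last e then 0 else A j) else 0) +
    if i = j then (if j = Fin.last e then 0 else 1) else 0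

lemma lastEntry_eq (A : Fin (e + 1) → ℤ) : lastEntry A = A (Fin.last e) := by
  simp [lastEntry, Fin.last]

lemma val_succ_lt_iff_ne_last (i : Fin (e + 1)) : (i : ℕ) + 1 < e + 1 ↔ i ≠ Fin.last e := by
  rw [Nat.add_lt_add_iff_right, ← Fin.lt_last_iff_ne_last, Fin.lt_def, Fin.val_last]

lemma rowA_apply (A : Fin (e + 1) → ℤ) (j : Fin (e + 1)) :
    rowA A j = ((A (Fin.last e) - if j = Fin.last e then 0 else A j : ℤ) : ℝ) := by
  simp only [rowA, lastEntry_eq, val_succ_lt_iff_ne_last, ite_not]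

lemma simplexA_eq_latticeHull (A : Fin (e + 1) → ℤ) :
    simplexA A = latticeHull (Fin.cons 0 (rowsA A) : Fin (e + 2) → _) := by
  refine latticeHull_cons_zero fun i j => ?_
  simp only [val_succ_lt_iff_ne_last, ite_not]
  split_ifs with hi
  · subst hi
    rw [rowA_apply, Int.cast_inj]
    grind [rowsA]
  · rw [single_one_apply_eq_intCast, Int.cast_inj]
    grind [rowsA]

lemma sum_rowsA_smul {M : Type*} [AddCommGroup M] (A : Fin (e + 1) → ℤ) (t : Fin (e + 1) → M)
    (j : Fin (e + 1)) :
    ∑ i, rowsA A i j • t i =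
      (A (Fin.last e) - if j = Fin.last e then 0 else A j) • t (Fin.last e) +
        if j = Fin.last e then 0 else t j := by
  simp only [rowsA, add_smul, ite_smul, zero_zsmul, one_zsmul, Finset.sum_add_distrib,
    Finset.sum_ite_eq', Finset.mem_univ, if_true]

lemma sub_zsmul_add_eq_zero_iff {M : Type*} [AddCommGroup M] {a c : ℤ} {x y : M}
    (hx : a • x = 0) : (a - c) • x + y = 0 ↔ y = c • x := by
  rw [sub_smul, hx, zero_sub, neg_add_eq_zero, eq_comm]

lemma mem_relationGroup_rowsA {A : Fin (e + 1) → ℤ} {t : Fin (e + 2) → UnitAddCircle} :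
    t ∈ relationGroup (Fin.cons 0 (rowsA A) : Fin (e + 2) → _) ↔
      A (Fin.last e) • t (Fin.last e).succ = 0 ∧
        (∀ j, j ≠ Fin.last e → t j.succ = A j • t (Fin.last e).succ) ∧ ∑ i, t i = 0 := by
  simp only [mem_relationGroup_cons_zero, sum_rowsA_smul A fun i => t i.succ, ← and_assoc]
  refine and_congr_left fun _ => ⟨fun h => ?_, fun ⟨hlast, h⟩ j => ?_⟩
  · have hlast : A (Fin.last e) • t (Fin.last e).succ = 0 := by simpa using h (Fin.last e)
    refine ⟨hlast, fun j hj => (sub_zsmul_add_eq_zero_iff hlast).1 ?_⟩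
    simpa only [if_neg hj] using h j
  · by_cases hj : j = Fin.last e
    · simp only [hj, if_true, sub_zero, add_zero, hlast]
    · simpa only [if_neg hj] using (sub_zsmul_add_eq_zero_iff hlast).2 (h j hj)

lemma sum_twoValued_eq_zero_of_mem_cyclicPairs {ι : Type*} [Fintype ι] [DecidableEq ι] {p : ℕ}
    {T : Finset ι} (hT : p ^ 2 ∣ T.card + p * Tᶜ.card) {a : UnitAddCircle × UnitAddCircle}
    (ha : a ∈ cyclicPairs p) : ∑ i, twoValued T a i = 0 := by
  obtain ⟨c, hc⟩ := hT
  rw [sum_twoValued, ha.2, smul_smul, ← add_smul, mul_comm Tᶜ.card, hc, mul_comm, mul_smul, ha.1,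
    smul_zero]

lemma relationGroup_rowsA_eq_image {p : ℕ} {A : Fin (e + 1) → ℤ} {T : Finset (Fin (e + 2))}
    (hlast : A (Fin.last e) = (p : ℤ) ^ 2) (hlastT : (Fin.last e).succ ∈ T)
    (hA : ∀ j, j ≠ Fin.last e → A j = if j.succ ∈ T then 1 else (p : ℤ))
    (hT : p ^ 2 ∣ T.card + p * Tᶜ.card) :
    (relationGroup (Fin.cons 0 (rowsA A) : Fin (e + 2) → _) : Set (Fin (e + 2) → UnitAddCircle)) =
      twoValued T '' cyclicPairs p := by
  have hAsmul (j : Fin (e + 1)) (hj : j ≠ Fin.last e) (x : UnitAddCircle) :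
      A j • x = if j.succ ∈ T then x else p • x := by
    rw [hA j hj, ite_smul, one_zsmul, natCast_zsmul]
  have hlastsmul (x : UnitAddCircle) : A (Fin.last e) • x = p ^ 2 • x := by
    rw [hlast, ← Nat.cast_pow, natCast_zsmul]
  ext t
  rw [SetLike.mem_coe, mem_relationGroup_rowsA, hlastsmul]
  constructor
  · rintro ⟨htorsion, hcoord, hsum⟩
    let a : UnitAddCircle × UnitAddCircle := (t (Fin.last e).succ, p • t (Fin.last e).succ)
    have ha : a ∈ cyclicPairs p := ⟨htorsion, rfl⟩
    refine ⟨a, ha, eq_of_sum_eq_of_succ_eq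
      ((sum_twoValued_eq_zero_of_mem_cyclicPairs hT ha).trans hsum.symm) fun j => ?_⟩
    by_cases hj : j = Fin.last e
    · rw [hj, twoValued_apply, if_pos hlastT]
    · rw [twoValued_apply, hcoord j hj, hAsmul j hj]
  · rintro ⟨a, ha, rfl⟩
    have hfirst : twoValued T a (Fin.last e).succ = a.1 := by rw [twoValued_apply, if_pos hlastT]
    rw [hfirst]
    refine ⟨ha.1, fun j hj => ?_, sum_twoValued_eq_zero_of_mem_cyclicPairs hT ha⟩
    rw [hAsmul j hj, ← ha.2, twoValued_apply]

end SimplexA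

section SimplexBC

variable {e : ℕ}

/-- The nonzero vertices of `Δ(B, C)` for `B = (1, …, 1, p)` of length `b + 1` and
`C = (p, …, p, 1, …, 1, p)` beginning with `b + 1` entries `p`; here `b` is counted from `0`. -/
def rowsBC (p : ℤ) (b : Fin (e + 1)) (i j : Fin (e + 1)) : ℤ :=
  (if i = b then (if j < b then p - 1 else if j = b then p else 0) else 0) +
  (if i = Fin.last e then (if j ≤ b then 0 else if j = Fin.last e then p else p - 1) else 0) +
    if i = j then (if j = b ∨ j = Fin.last e then 0 else 1) else 0

lemma rowB_apply {p : ℤ} {s : ℕ} (hs : s < e + 1) {B : Fin (s + 1) → ℤ}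
    (hB : ∀ j, j ≠ Fin.last s → B j = 1) (hBlast : B (Fin.last s) = p) (j : Fin (e + 1)) :
    rowB (s + 1) B j =
      ((if j < ⟨s, hs⟩ then p - 1 else if j = ⟨s, hs⟩ then p else 0 : ℤ) : ℝ) := by
  simp only [rowB, lastEntry_eq, hBlast, add_lt_add_iff_right, add_left_inj, Fin.lt_def,
    Fin.ext_iff]
  split_ifs with hlt
  · rw [hB _ (Fin.ne_of_lt hlt)]
  · rfl
  · exact Int.cast_zero.symm

lemma rowA_eq_of_eq_one {p : ℤ} {b : Fin (e + 1)} (hb : b < Fin.last e) {C : Fin (e + 1) → ℤ}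
    (hCle : ∀ j ≤ b, C j = p) (hCgt : ∀ j, b < j → j ≠ Fin.last e → C j = 1)
    (hClast : C (Fin.last e) = p) (j : Fin (e + 1)) :
    rowA C j = ((if j ≤ b then 0 else if j = Fin.last e then p else p - 1 : ℤ) : ℝ) := by
  rw [rowA_apply, hClast, Int.cast_inj]
  split_ifs with hlast hle hle
  · exact absurd (hlast ▸ hle) hb.not_ge
  · exact sub_zero p
  · rw [hCle j hle, sub_self]
  · rw [hCgt j (not_le.1 hle) hlast]

lemma simplexBC_eq_latticeHull {s : ℕ} {p : ℤ} {B : Fin (s + 1) → ℤ} {C : Fin (e + 1) → ℤ}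
    {b : Fin (e + 1)} (hsb : s = b) (hb : b < Fin.last e)
    (hB : ∀ j, j ≠ Fin.last s → B j = 1) (hBlast : B (Fin.last s) = p)
    (hCle : ∀ j ≤ b, C j = p) (hCgt : ∀ j, b < j → j ≠ Fin.last e → C j = 1)
    (hClast : C (Fin.last e) = p) :
    simplexBC (s + 1) B C = latticeHull (Fin.cons 0 (rowsBC p b) : Fin (e + 2) → _) := by
  subst hsb
  refine latticeHull_cons_zero fun i j => ?_
  have hib : (i : ℕ) + 1 = b + 1 ↔ i = b := by rw [add_left_inj, Fin.ext_iff]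
  have hilast : (i : ℕ) + 1 = e + 1 ↔ i = Fin.last e := by
    rw [add_left_inj, Fin.ext_iff, Fin.val_last]
  simp only [hib, hilast]
  split_ifs with hi hi'
  · subst hi
    rw [rowB_apply i.2 hB hBlast, Int.cast_inj]
    grind [rowsBC]
  · subst hi'
    rw [rowA_eq_of_eq_one hb hCle hCgt hClast, Int.cast_inj]
    grind [rowsBC]
  · rw [single_one_apply_eq_intCast, Int.cast_inj]
    grind [rowsBC]

lemma sum_rowsBC_smul {M : Type*} [AddCommGroup M] (p : ℤ) (b : Fin (e + 1))
    (t : Fin (e + 1) → M) (j : Fin (e + 1)) :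
    ∑ i, rowsBC p b i j • t i =
      (if j < b then p - 1 else if j = b then p else 0) • t b +
      (if j ≤ b then 0 else if j = Fin.last e then p else p - 1) • t (Fin.last e) +
        if j = b ∨ j = Fin.last e then 0 else t j := by
  simp only [rowsBC, add_smul, ite_smul, zero_zsmul, one_zsmul, Finset.sum_add_distrib,
    Finset.sum_ite_eq', Finset.mem_univ, if_true]

lemma mem_relationGroup_rowsBC {p : ℤ} {b : Fin (e + 1)} (hb : b < Fin.last e)
    {t : Fin (e + 2) → UnitAddCircle} :
    t ∈ relationGroup (Fin.cons 0 (rowsBC p b) : Fin (e + 2) → _) ↔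
      p • t b.succ = 0 ∧ p • t (Fin.last e).succ = 0 ∧
        (∀ j, t j.succ = if j ≤ b then t b.succ else t (Fin.last e).succ) ∧ ∑ i, t i = 0 := by
  simp only [mem_relationGroup_cons_zero, sum_rowsBC_smul p b fun i => t i.succ, ← and_assoc]
  refine and_congr_left fun _ => ?_
  have hcolumn (hpb : p • t b.succ = 0) (hplast : p • t (Fin.last e).succ = 0) (j : Fin (e + 1)) :
      (if j < b then p - 1 else if j = b then p else 0) • t b.succ +
          (if j ≤ b then 0 else if j = Fin.last e then p else p - 1) • t (Fin.last e).succ +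
            (if j = b ∨ j = Fin.last e then 0 else t j.succ) = 0 ↔
        t j.succ = if j ≤ b then t b.succ else t (Fin.last e).succ := by
    rcases lt_trichotomy j b with hj | rfl | hj
    · simp [hj, hj.le, hj.ne, (hj.trans hb).ne, sub_zsmul_add_eq_zero_iff hpb]
    · simp [hb.ne, hpb]
    · by_cases hjlast : j = Fin.last e
      · simp [hjlast, hb.not_ge, hb.not_gt, hb.ne', -Fin.succ_last, hplast]
      · simp [hj.not_ge, hj.not_gt, hj.ne', hjlast, sub_zsmul_add_eq_zero_iff hplast,
          -Fin.succ_last]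
  refine ⟨fun h => ?_, fun ⟨⟨hpb, hplast⟩, h⟩ j => (hcolumn hpb hplast j).2 (h j)⟩
  have hpb : p • t b.succ = 0 := by simpa [hb.ne] using h b
  have hplast : p • t (Fin.last e).succ = 0 := by
    simpa [hb.not_ge, hb.not_gt, hb.ne', -Fin.succ_last] using h (Fin.last e)
  exact ⟨⟨hpb, hplast⟩, fun j => (hcolumn hpb hplast j).1 (h j)⟩

lemma sum_twoValued_eq_zero_of_mem_torsionPairs {ι : Type*} [Fintype ι] [DecidableEq ι] {p : ℕ}
    {T : Finset ι} (hT : p ∣ T.card) (hTc : p ∣ Tᶜ.card) {a : UnitAddCircle × UnitAddCircle}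
    (ha : a ∈ torsionPairs p) : ∑ i, twoValued T a i = 0 := by
  obtain ⟨c, hc⟩ := hT
  obtain ⟨c', hc'⟩ := hTc
  rw [sum_twoValued, hc, hc', mul_comm p, mul_comm p, mul_smul, mul_smul, ha.1, ha.2, smul_zero,
    smul_zero, add_zero]

lemma relationGroup_rowsBC_eq_image {p : ℕ} {b : Fin (e + 1)} (hb : b < Fin.last e)
    {T : Finset (Fin (e + 2))} (hbT : ∀ j : Fin (e + 1), j.succ ∈ T ↔ j ≤ b) (hT : p ∣ T.card)
    (hTc : p ∣ Tᶜ.card) :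
    (relationGroup (Fin.cons 0 (rowsBC p b) : Fin (e + 2) → _) :
      Set (Fin (e + 2) → UnitAddCircle)) = twoValued T '' torsionPairs p := by
  ext t
  rw [SetLike.mem_coe, mem_relationGroup_rowsBC hb, natCast_zsmul, natCast_zsmul]
  constructor
  · rintro ⟨htb, htlast, hcoord, hsum⟩
    have ha : (t b.succ, t (Fin.last e).succ) ∈ torsionPairs p := ⟨htb, htlast⟩
    refine ⟨_, ha, eq_of_sum_eq_of_succ_eq
      ((sum_twoValued_eq_zero_of_mem_torsionPairs hT hTc ha).trans hsum.symm) fun j => ?_⟩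
    simp only [twoValued_apply, hbT, hcoord j]
  · rintro ⟨a, ha, rfl⟩
    refine ⟨?_, ?_, fun j => ?_, sum_twoValued_eq_zero_of_mem_torsionPairs hT hTc ha⟩
    · simpa only [twoValued_apply, hbT, le_refl, if_true] using ha.1
    · simpa only [twoValued_apply, hbT, hb.not_ge, if_false] using ha.2
    · simp only [twoValued_apply, hbT, le_refl, if_true, hb.not_ge, if_false]

end SimplexBC

section Equivalences

variable {p m e : ℕ} {V : Fin (e + 2) → Fin (e + 1) → ℤ}

lemma unimodEquiv_simplexA_ones (hV : (homMat V).det ≠ 0) (hd : e + 2 = p ^ 2 * m)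
    (hΛ : (relationGroup V : Set (Fin (e + 2) → UnitAddCircle)) =
      twoValued Finset.univ '' cyclicPairs p) :
    UnimodEquiv (latticeHull V) (simplexA fun i : Fin (e + 1) =>
      if (i : ℕ) < p ^ 2 * m - 2 then 1 else (p ^ 2 : ℤ)) := by
  have he : p ^ 2 * m - 2 = e := by omega
  rw [simplexA_eq_latticeHull]
  refine unimodEquiv_of_relationGroup_eq_image hV rfl hΛ
    (relationGroup_rowsA_eq_image ?_ (Finset.mem_univ _) (fun j hj => ?_) ?_)
  · simp [he]
  · rw [if_pos (Finset.mem_univ _), he, if_pos (Fin.val_lt_last hj)]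
  · simp [hd]

lemma unimodEquiv_simplexA_two (hp : 2 ≤ p) (hm : 0 < m) (hV : (homMat V).det ≠ 0)
    {S : Finset (Fin (e + 2))} (hS : S.card = p * m) (hSc : Sᶜ.card + m = p ^ 2 * m)
    (hΛ : (relationGroup V : Set (Fin (e + 2) → UnitAddCircle)) = twoValued S '' cyclicPairs p) :
    UnimodEquiv (latticeHull V) (simplexA fun i : Fin (e + 1) =>
      if (i : ℕ) < p * m - 1 then 1
      else if (i : ℕ) < p * m - 1 + ((p ^ 2 - 1) * m - 1) then (p : ℤ) else (p ^ 2 : ℤ)) := by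
  have hpm : 2 * m ≤ p * m := Nat.mul_le_mul_right m hp
  have hppm : p * m * 2 ≤ p ^ 2 * m := by nlinarith
  have hcard : p * m + Sᶜ.card = e + 2 := by
    rw [← hS, Finset.card_add_card_compl, Fintype.card_fin]
  have he : p * m - 1 + ((p ^ 2 - 1) * m - 1) = e := by
    rw [Nat.sub_mul, one_mul]
    omega
  have hlt : ¬ e < p * m - 1 := by omega
  let b : Fin (e + 2) := ⟨p * m, by omega⟩
  let T : Finset (Fin (e + 2)) := insert (Fin.last _) (Finset.Ioo 0 b)
  have hT : T.card = p * m := by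
    rw [Finset.card_insert_of_notMem, Fin.card_Ioo]
    · simp only [b, Fin.val_zero]
      omega
    · rw [Finset.mem_Ioo, not_and, not_lt]
      exact fun _ => Fin.le_last b
  have hTc : Tᶜ.card = Sᶜ.card := by
    rw [Finset.card_compl, Finset.card_compl, hT, hS]
  have hmem (j : Fin (e + 1)) (hj : j ≠ Fin.last e) : j.succ ∈ T ↔ (j : ℕ) < p * m - 1 := by
    simp only [T, b, Finset.mem_insert, Finset.mem_Ioo, Fin.lt_def, Fin.val_succ, Fin.val_zero,
      ← Fin.succ_last, Fin.succ_inj, hj, false_or]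
    omega
  rw [simplexA_eq_latticeHull]
  refine unimodEquiv_of_relationGroup_eq_image hV (hS.trans hT.symm) hΛ
    (relationGroup_rowsA_eq_image ?_ (Finset.mem_insert_self _ _) (fun j hj => ?_) ⟨p * m, ?_⟩)
  · simp [he, hlt]
  · simp only [he, hmem j hj, Fin.val_lt_last hj, if_true]
  · rw [hT, hTc]
    linear_combination p * hSc

lemma unimodEquiv_simplexBC (hp : 2 ≤ p) (hm : 0 < m) (hV : (homMat V).det ≠ 0)
    {S : Finset (Fin (e + 2))} (hS : S.card = p * m) (hSc : Sᶜ.card = p ^ 2 * m)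
    (hΛ : (relationGroup V : Set (Fin (e + 2) → UnitAddCircle)) =
      twoValued S '' torsionPairs p) :
    UnimodEquiv (latticeHull V) (simplexBC (p * m)
      (fun i : Fin (p * m) => if (i : ℕ) < p * m - 1 then 1 else (p : ℤ))
      (fun i : Fin (e + 1) => if (i : ℕ) < p * m then (p : ℤ)
        else if (i : ℕ) < p * m + (p ^ 2 * m - 2) then 1 else (p : ℤ))) := by
  have hpm : 2 * m ≤ p * m := Nat.mul_le_mul_right m hp
  have hppm : p * m * 2 ≤ p ^ 2 * m := by nlinarith
  have hcard : p * m + Sᶜ.card = e + 2 := by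
    rw [← hS, Finset.card_add_card_compl, Fintype.card_fin]
  have he : p * m + (p ^ 2 * m - 2) = e := by omega
  have hdvd : p ∣ p * m := Dvd.intro m rfl
  have hdvd' : p ∣ p ^ 2 * m := (dvd_pow_self p two_ne_zero).mul_right m
  rw [he]
  obtain ⟨s, hs⟩ : ∃ s, p * m = s + 1 := ⟨p * m - 1, by omega⟩
  rw [hs] at hS hdvd ⊢
  let b : Fin (e + 1) := ⟨s, by omega⟩
  have hb : b < Fin.last e := Fin.lt_def.2 (show s < e by omega)
  let T : Finset (Fin (e + 2)) := Finset.Ioc 0 b.succ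
  have hT : T.card = s + 1 := by simp [T, b]
  have hTc : Tᶜ.card = p ^ 2 * m := by
    rw [← hSc, Finset.card_compl, Finset.card_compl, hT, hS]
  have hmem (j : Fin (e + 1)) : j.succ ∈ T ↔ j ≤ b := by simp [T, Fin.succ_le_succ_iff]
  rw [simplexBC_eq_latticeHull (p := p) (b := b) rfl hb]
  case hB => exact fun j hj => if_pos (Fin.val_lt_last hj)
  case hBlast => simp [b]
  case hCle => exact fun j hj => if_pos (Nat.lt_succ_of_le hj)
  case hCgt =>
    intro j hj hjlast
    rw [if_neg (Nat.succ_le_of_lt hj).not_gt, if_pos (Fin.val_lt_last hjlast)]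
  case hClast => simp
  exact unimodEquiv_of_relationGroup_eq_image hV (hS.trans hT.symm) hΛ
    (relationGroup_rowsBC_eq_image hb hmem (hT ▸ hdvd) (hTc ▸ hdvd'))

end Equivalences

lemma ne_zero_of_hasDeltaPolySimplex {d q k : ℕ} {Δ : Set (Fin d → ℝ)} (hq : 2 ≤ q)
    (hδ : HasDeltaPolySimplex d q k Δ) : d ≠ 0 := by
  rintro rfl
  have hle : latticePointCount (((k + 1 : ℕ) : ℝ) • Δ) ≤ 1 :=
    (Set.ncard_le_one (Set.toFinite _)).2 fun _ _ _ _ => Subsingleton.elim _ _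
  have hsum : ∑ j ∈ Finset.range 2, (if j * (k + 1) ≤ k + 1 then
      (k + 1 - j * (k + 1) + 0).choose 0 else 0) ≤ 1 :=
    (Finset.sum_le_sum_of_subset (Finset.range_mono hq)).trans ((hδ (k + 1)).symm.le.trans hle)
  rw [Finset.sum_range_succ, Finset.sum_range_one] at hsum
  simp at hsum

lemma exists_mem_relationGroup_ne_zero {e : ℕ} {V : Fin (e + 2) → Fin (e + 1) → ℤ}
    (hV : AffineIndependent ℝ fun i => realPoint (V i))
    (hpyr : ∀ Q : Set (Fin e → ℝ), IsLatticeSimplex Q → ¬ UnimodEquiv (latticeHull V) (Pyr Q))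
    (i : Fin (e + 2)) : ∃ t : relationGroup V, t.1 i ≠ 0 := by
  by_contra! hi
  obtain ⟨Q, hQ, hVQ⟩ := exists_unimodEquiv_pyr hV fun t ht => hi ⟨t, ht⟩
  exact hpyr Q hQ hVQ

theorem stmt_16 (p k d : ℕ) (hp : p.Prime) (Δ : Set (Fin d → ℝ))
    (hsimp : IsLatticeSimplex Δ)
    (hδ : HasDeltaPolySimplex d (p^2) k Δ)
    (hpyr : ¬ ∃ (e : ℕ) (h : d = e + 1) (Q : Set (Fin e → ℝ)),
      IsLatticeSimplex Q ∧
      UnimodEquiv ((fun x : Fin d → ℝ => x ∘ (finCongr h.symm)) '' Δ) (Pyr Q)) :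
    (d = p^2*(k+1) - 1 ∧
      UnimodEquiv Δ (simplexA (fun i : Fin d =>
        if (i : ℕ) < p^2*(k+1) - 2 then 1 else (p^2 : ℤ)))) ∨
    (d = (p^2 + p - 1)*(k+1) - 1 ∧
      UnimodEquiv Δ (simplexA (fun i : Fin d =>
        if (i : ℕ) < p*(k+1) - 1 then 1
        else if (i : ℕ) < p*(k+1) - 1 + ((p^2 - 1)*(k+1) - 1) then (p : ℤ)
        else (p^2 : ℤ)))) ∨
    (d = p*(p+1)*(k+1) - 1 ∧
      UnimodEquiv Δ (simplexBC (p*(k+1))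
        (fun i : Fin (p*(k+1)) =>
          if (i : ℕ) < p*(k+1) - 1 then 1 else (p : ℤ))
        (fun i : Fin d =>
          if (i : ℕ) < p*(k+1) then (p : ℤ)
          else if (i : ℕ) < p*(k+1) + (p^2*(k+1) - 2) then 1
          else (p : ℤ)))) := by
  have hq : 2 ≤ p ^ 2 := hp.two_le.trans (Nat.le_self_pow two_ne_zero p)
  obtain _ | e := d
  · exact absurd rfl (ne_zero_of_hasDeltaPolySimplex hq hδ)
  obtain ⟨V, hV, rfl⟩ := hsimp
  have hdet := det_homMat_ne_zero hV
  have hne := exists_mem_relationGroup_ne_zero hV fun Q hQ hVQ =>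
    hpyr ⟨e, rfl, Q, hQ, (Set.image_id (latticeHull V)).symm ▸ hVQ⟩
  obtain ⟨hcard, h, H, hheight⟩ := exists_isSubadditiveNumbering hdet hδ
  obtain ⟨hd, hΛ⟩ | ⟨S, hS, ⟨hSc, hΛ⟩ | ⟨hSc, hΛ⟩⟩ :=
    eq_image_pairs_of_numbering H hp hheight hcard hne
  · rw [Fintype.card_fin] at hd
    exact Or.inl ⟨by omega, unimodEquiv_simplexA_ones hdet hd hΛ⟩
  all_goals
    have hcompl := S.card_add_card_compl
    rw [Fintype.card_fin] at hcompl
  · refine Or.inr (Or.inl ⟨?_, unimodEquiv_simplexA_two hp.two_le k.succ_pos hdet hS hSc hΛ⟩)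
    rw [Nat.sub_mul, Nat.add_mul]
    omega
  · refine Or.inr (Or.inr ⟨?_, unimodEquiv_simplexBC hp.two_le k.succ_pos hdet hS hSc hΛ⟩)
    have hmul : p * (p + 1) * (k + 1) = p * (k + 1) + p ^ 2 * (k + 1) := by ring
    omega
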